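/- arXiv:1211.3945 — 4 statements merged into one kernel-verified Lean document; each statement's English description precedes it below -/
import Mathlib

section
/- Let α ∈ ℂ× with α² ≠ 1 and let A ∈ Sp₄(ℂ) satisfy (A − αI)²(A − α⁻¹I)² = 0 and (A − αI)(A − α⁻¹I) ≠ 0 (so A has Jordan form αJ(2) ⊕ α⁻¹J(2), denoted [[α] ⊕ [α]] for α ≠ α⁻¹). Then dim_ℂ c(A) = 2, equivalently δ(A) = 8. -/
open Matrix

noncomputable section

/-- The standard symplectic form matrix `Ω = [[0, I₂], [−I₂, 0]]` on `ℂ⁴`. -/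
def Omega : Matrix (Fin 4) (Fin 4) ℂ :=
  !![0, 0, 1, 0; 0, 0, 0, 1; -1, 0, 0, 0; 0, -1, 0, 0]

/-- The centralizer `c(A) = {X ∈ 𝔰𝔭₄(ℂ) : A X = X A}` of `A` inside the Lie algebra
`𝔰𝔭₄(ℂ) = {X : Xᵀ Ω + Ω X = 0}`, as a complex subspace of the `4×4` matrices. -/
def sp4cent (A : Matrix (Fin 4) (Fin 4) ℂ) : Submodule ℂ (Matrix (Fin 4) (Fin 4) ℂ) where
  carrier := {X | Xᵀ * Omega + Omega * X = 0 ∧ A * X = X * A}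
  add_mem' := by
    rintro X Y ⟨hX1, hX2⟩ ⟨hY1, hY2⟩
    refine ⟨?_, ?_⟩
    · have h : (X + Y)ᵀ * Omega + Omega * (X + Y)
          = (Xᵀ * Omega + Omega * X) + (Yᵀ * Omega + Omega * Y) := by
        rw [Matrix.transpose_add, Matrix.add_mul, Matrix.mul_add]
        abel
      rw [h, hX1, hY1, add_zero]
    · rw [Matrix.mul_add, Matrix.add_mul, hX2, hY2]
  zero_mem' := by
    refine ⟨?_, ?_⟩ <;> simp
  smul_mem' := by
    rintro c X ⟨hX1, hX2⟩
    refine ⟨?_, ?_⟩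
    · have h : (c • X)ᵀ * Omega + Omega * (c • X) = c • (Xᵀ * Omega + Omega * X) := by
        rw [Matrix.transpose_smul, Matrix.smul_mul, Matrix.mul_smul, smul_add]
      rw [h, hX1, smul_zero]
    · rw [Matrix.mul_smul, Matrix.smul_mul, hX2]

/-!
Let `X ↦ X*` be the adjoint for the symplectic form, so that `A* = A⁻¹`. It is an involution of the
commutant of `A` in the full matrix algebra, with `-1`-eigenspace `c(A)`. As `A` has neither `1` nor
`-1` as an eigenvalue, `A - A⁻¹` is invertible; it commutes with the commutant and is skew-adjoint,
so multiplication by it exchanges the two eigenspaces and `c(A)` has half the dimension of the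
commutant. That dimension is `4`, because `A` is nonderogatory: `N = A + A⁻¹ - (α + α⁻¹)` satisfies
`(A - α)(A - α⁻¹) = AN`, and if the minimal polynomial were a proper divisor of
`(X - α)²(X - α⁻¹)²` then `AN = μN` for `μ = α` or `μ = α⁻¹`, whence `A⁻¹N = μN` by taking adjoints,
so `N = μ²N` and `N = 0`.
-/

section CyclicVector

open Module Submodule

variable {R M : Type*} [CommRing R] [AddCommGroup M] [Module R M]

lemma torsionOf_add_eq_span_mul {x y : R} (hxy : IsCoprime x y) {v w : M}
    (hv : Ideal.torsionOf R M v = Ideal.span {x}) (hw : Ideal.torsionOf R M w = Ideal.span {y}) :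
    Ideal.torsionOf R M (v + w) = Ideal.span {x * y} := by
  have hv' (q : R) : q • v = 0 ↔ x ∣ q := by
    rw [← Ideal.mem_span_singleton, ← hv, Ideal.mem_torsionOf_iff]
  have hw' (q : R) : q • w = 0 ↔ y ∣ q := by
    rw [← Ideal.mem_span_singleton, ← hw, Ideal.mem_torsionOf_iff]
  ext q
  rw [Ideal.mem_torsionOf_iff, Ideal.mem_span_singleton, smul_add]
  refine ⟨fun hq => hxy.mul_dvd ?_ ?_, fun hq => ?_⟩
  · have hyq : (y * q) • v = 0 := by
      have := congrArg (y • ·) hq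
      rwa [smul_zero, smul_add, ← mul_smul, ← mul_smul, (hw' (y * q)).2 (dvd_mul_right y q),
        add_zero] at this
    exact hxy.dvd_of_dvd_mul_left ((hv' _).1 hyq)
  · have hxq : (x * q) • w = 0 := by
      have := congrArg (x • ·) hq
      rwa [smul_zero, smul_add, ← mul_smul, ← mul_smul, (hv' (x * q)).2 (dvd_mul_right x q),
        zero_add] at this
    exact hxy.symm.dvd_of_dvd_mul_left ((hw' _).1 hxq)
  · rw [(hv' q).2 ((dvd_mul_right x y).trans hq), (hw' q).2 ((dvd_mul_left y x).trans hq),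
      add_zero]

variable [IsDomain R] [IsPrincipalIdealRing R]

lemma exists_torsionOf_eq_span_prime_pow {m p : R} (hm : m ≠ 0)
    (hann : annihilator R M = Ideal.span {m}) (hp : Prime p) {k : ℕ} (hpm : p ^ k ∣ m) :
    ∃ v : M, Ideal.torsionOf R M v = Ideal.span {p ^ k} := by
  cases k with
  | zero => exact ⟨0, by simp⟩
  | succ k =>
    obtain ⟨r, rfl⟩ := hpm
    obtain ⟨w, hw⟩ : ∃ w : M, (p ^ k * r) • w ≠ 0 := by
      by_contra! h
      have hdvd : p ^ k * r * p ∣ p ^ k * r * 1 := by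
        rw [mul_one, mul_right_comm, ← pow_succ, ← Ideal.mem_span_singleton, ← hann]
        exact mem_annihilator.2 h
      have hr : p ^ k * r ≠ 0 := fun h0 => hm (by rw [pow_succ, mul_right_comm, h0, zero_mul])
      exact hp.not_dvd_one ((mul_dvd_mul_iff_left hr).1 hdvd)
    have hkill : p ^ (k + 1) • r • w = 0 := by
      rw [← mul_smul]
      exact mem_annihilator.1 (hann ▸ Ideal.mem_span_singleton_self _) w
    refine ⟨r • w, le_antisymm ?_ ?_⟩
    · obtain ⟨q, hq⟩ := IsPrincipal.principal (Ideal.torsionOf R M (r • w))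
      change _ = Ideal.span {q} at hq
      have hqp : q ∣ p ^ (k + 1) := by
        rwa [← Ideal.mem_span_singleton, ← hq, Ideal.mem_torsionOf_iff]
      obtain ⟨j, -, hqj⟩ := (dvd_prime_pow hp _).1 hqp
      rw [hq, Ideal.span_singleton_le_span_singleton]
      by_contra hlt
      have hjk : j ≤ k := by
        by_contra! h
        exact hlt ((pow_dvd_pow p h).trans hqj.symm.dvd)
      have hmem : p ^ k ∈ Ideal.torsionOf R M (r • w) := by
        rw [hq, Ideal.mem_span_singleton]
        exact hqj.dvd.trans (pow_dvd_pow p hjk)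
      exact hw (by rwa [mul_smul, ← Ideal.mem_torsionOf_iff])
    · rwa [Ideal.span_singleton_le_iff_mem, Ideal.mem_torsionOf_iff]

lemma exists_torsionOf_eq_annihilator (h : annihilator R M ≠ ⊥) :
    ∃ v : M, Ideal.torsionOf R M v = annihilator R M := by
  obtain ⟨m, hm⟩ := IsPrincipal.principal (annihilator R M)
  change _ = Ideal.span {m} at hm
  have hm0 : m ≠ 0 := by
    rintro rfl
    exact h (hm.trans (by simp))
  suffices ∀ d : R, d ∣ m → ∃ v : M, Ideal.torsionOf R M v = Ideal.span {d} from
    hm ▸ this m dvd_rfl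
  intro d
  induction d using UniqueFactorizationMonoid.induction_on_coprime with
  | h0 => exact fun h0 => (hm0 (zero_dvd_iff.1 h0)).elim
  | h1 hu => exact fun _ => ⟨0, by rw [Ideal.torsionOf_zero, Ideal.span_singleton_eq_top.2 hu]⟩
  | hpr i hp => exact exists_torsionOf_eq_span_prime_pow hm0 hm hp
  | hcp hxy ihx ihy =>
    intro hdvd
    obtain ⟨v, hv⟩ := ihx (dvd_of_mul_right_dvd hdvd)
    obtain ⟨w, hw⟩ := ihy (dvd_of_mul_left_dvd hdvd)
    exact ⟨v + w, torsionOf_add_eq_span_mul hxy.isCoprime hv hw⟩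

end CyclicVector

section Nonderogatory

open Module Polynomial

variable {K V : Type*} [Field K] [AddCommGroup V] [Module K V] [FiniteDimensional K V]

lemma exists_forall_minpoly_dvd_of_aeval_apply_eq_zero (f : End K V) :
    ∃ v : V, ∀ p : K[X], aeval f p v = 0 → minpoly K f ∣ p := by
  have hann : annihilator K[X] (AEval K V f) = Ideal.span {minpoly K f} := by
    rw [AEval.annihilator_eq_ker_aeval, minpoly.ker_aeval_eq_span_minpoly]
  obtain ⟨w, hw⟩ := exists_torsionOf_eq_annihilator (R := K[X]) (M := AEval K V f) <| by
    rw [hann, Ne, Ideal.span_singleton_eq_bot]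
    exact minpoly.ne_zero (Algebra.IsIntegral.isIntegral f)
  refine ⟨(AEval.of K V f).symm w, fun p hp => ?_⟩
  rw [← Ideal.mem_span_singleton, ← hann, ← hw, Ideal.mem_torsionOf_iff]
  have := AEval.of_aeval_smul f p ((AEval.of K V f).symm w)
  rwa [End.smul_def, hp, map_zero, LinearEquiv.apply_symm_apply, eq_comm] at this

lemma exists_cyclic_vector {f : End K V} (hf : (minpoly K f).natDegree = finrank K V) :
    ∃ v : V, ∀ w : V, ∃ p : K[X], aeval f p v = w := by
  obtain ⟨v, hv⟩ := exists_forall_minpoly_dvd_of_aeval_apply_eq_zero f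
  let φ : degreeLT K (finrank K V) →ₗ[K] V :=
    (LinearMap.applyₗ v ∘ₗ (aeval f).toLinearMap).domRestrict _
  have hinj : Function.Injective φ := by
    refine (injective_iff_map_eq_zero φ).2 fun p hp => Subtype.ext ?_
    refine eq_zero_of_dvd_of_degree_lt (hv p hp) ?_
    rw [degree_eq_natDegree (minpoly.ne_zero (Algebra.IsIntegral.isIntegral f)), hf]
    exact mem_degreeLT.1 p.2
  have hdim : finrank K (degreeLT K (finrank K V)) = finrank K V := by
    rw [(degreeLTEquiv K _).finrank_eq, finrank_fin_fun]
  have : FiniteDimensional K (degreeLT K (finrank K V)) := .of_injective φ hinj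
  refine ⟨v, fun w => ?_⟩
  obtain ⟨p, hp⟩ := (LinearMap.injective_iff_surjective_of_finrank_eq_finrank hdim).1 hinj w
  exact ⟨p, hp⟩

lemma finrank_centralizer_of_natDegree_minpoly {f : End K V}
    (hf : (minpoly K f).natDegree = finrank K V) :
    finrank K (Subalgebra.centralizer K {f}) = finrank K V := by
  obtain ⟨v, hv⟩ := exists_cyclic_vector hf
  let ev : Subalgebra.centralizer K {f} →ₗ[K] V :=
    LinearMap.applyₗ v ∘ₗ (Subalgebra.centralizer K {f}).val.toLinearMap
  have hev (g : Subalgebra.centralizer K {f}) : ev g = (g : End K V) v := rfl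
  have haeval (p : K[X]) {g : End K V} (hg : g ∈ Subalgebra.centralizer K {f}) :
      Commute g (aeval f p) := by
    have hgf : g * f = f * g := ((Subalgebra.mem_centralizer_iff K).1 hg f rfl).symm
    exact Algebra.commute_of_mem_adjoin_singleton_of_commute (aeval_mem_adjoin_singleton K f) hgf
  have hinj : Function.Injective ev := by
    refine (injective_iff_map_eq_zero ev).2 fun g hg => Subtype.ext (LinearMap.ext fun w => ?_)
    obtain ⟨p, rfl⟩ := hv w
    rw [← End.mul_apply, (haeval p g.2).eq, End.mul_apply, ← hev, hg, map_zero]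
    rfl
  have hsurj : Function.Surjective ev := by
    intro w
    obtain ⟨p, hp⟩ := hv w
    have hcomm : f * aeval f p = aeval f p * f :=
      Algebra.commute_of_mem_adjoin_self (aeval_mem_adjoin_singleton K f)
    exact ⟨⟨aeval f p, (Subalgebra.mem_centralizer_iff K).2 fun _ h => h ▸ hcomm⟩, hp⟩
  exact (LinearEquiv.ofBijective ev ⟨hinj, hsurj⟩).finrank_eq

lemma finrank_centralizer_algEquiv_apply {R S : Type*} [Ring R] [Ring S] [Algebra K R]
    [Algebra K S] (e : R ≃ₐ[K] S) (a : R) :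
    finrank K (Subalgebra.centralizer K {e a}) = finrank K (Subalgebra.centralizer K {a}) := by
  have hmap : (Subalgebra.centralizer K {a}).map e.toAlgHom = Subalgebra.centralizer K {e a} := by
    ext y
    obtain ⟨x, rfl⟩ := e.surjective y
    simp [Subalgebra.mem_centralizer_iff, ← map_mul]
  rw [← hmap]
  exact (e.subalgebraMap _).toLinearEquiv.finrank_eq.symm

lemma finrank_matrix_centralizer_of_natDegree_minpoly {n : Type*} [Fintype n] [DecidableEq n]
    {A : Matrix n n K} (hA : (minpoly K A).natDegree = Fintype.card n) :
    finrank K (Subalgebra.centralizer K {A}) = Fintype.card n := by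
  rw [← finrank_centralizer_algEquiv_apply toLinAlgEquiv' A,
    finrank_centralizer_of_natDegree_minpoly, finrank_pi]
  rw [minpoly.algEquiv_eq, hA, finrank_pi]

end Nonderogatory

section Polynomial

open Polynomial

variable {K R : Type*} [Field K] [Ring R] [Algebra K R]

lemma minpoly_eq_of_forall_aeval_ne_zero {a : R} {p : K[X]} (hmonic : p.Monic) (hsplits : p.Splits)
    (hroot : aeval a p = 0) (h : ∀ μ r, p = (X - C μ) * r → aeval a r ≠ 0) :
    minpoly K a = p := by
  have hint : IsIntegral K a := ⟨p, hmonic, hroot⟩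
  obtain ⟨s, hs⟩ := minpoly.dvd K a hroot
  have hs0 : s ≠ 0 := by
    rintro rfl
    exact hmonic.ne_zero (by rw [hs, mul_zero])
  have hdeg : s.degree = 0 := by
    by_contra hdeg
    obtain ⟨μ, hμ⟩ := (hsplits.of_dvd hmonic.ne_zero (Dvd.intro_left _ hs.symm)).exists_eval_eq_zero
      hdeg
    obtain ⟨t, rfl⟩ := dvd_iff_isRoot.2 hμ
    refine h μ (minpoly K a * t) (by rw [hs, mul_left_comm]) ?_
    rw [map_mul, minpoly.aeval, zero_mul]
  have hs1 : s = 1 :=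
    ((minpoly.monic hint).of_mul_monic_left (hs ▸ hmonic)).eq_one_of_isUnit
      (isUnit_iff_degree_eq_zero.2 hdeg)
  rw [hs, hs1, mul_one]

lemma isUnit_aeval_of_isCoprime {a : R} {p q : K[X]} (hpq : IsCoprime p q) (hp : aeval a p = 0) :
    IsUnit (aeval a q) := by
  obtain ⟨u, v, huv⟩ := hpq
  have hv : aeval a v * aeval a q = 1 := by
    rw [← map_mul, ← map_one (aeval (R := K) a), ← huv, map_add, map_mul _ u, hp,
      mul_zero, zero_add]
  have hv' : aeval a q * aeval a v = 1 := by rw [← map_mul, mul_comm, map_mul, hv]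
  exact ⟨⟨_, _, hv', hv⟩, rfl⟩

lemma isUnit_sq_sub_one_of_sq_mul_sq_eq_zero {a : R} {α β : K} (hα : α ^ 2 ≠ 1) (hβ : β ^ 2 ≠ 1)
    (h : (a - α • 1) ^ 2 * (a - β • 1) ^ 2 = 0) : IsUnit (a ^ 2 - 1) := by
  have hcop {μ : K} (hμ : μ ^ 2 ≠ 1) : IsCoprime (X - C μ) (X ^ 2 - 1 : K[X]) :=
    (irreducible_X_sub_C μ).coprime_iff_not_dvd.2 <| mt dvd_iff_isRoot.1 <| by
      simpa [sub_eq_zero] using hμ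
  have := isUnit_aeval_of_isCoprime (a := a) ((hcop hα).pow_left.mul_left (hcop hβ).pow_left) (by
    simpa [Algebra.algebraMap_eq_smul_one] using h)
  simpa using this

end Polynomial

section Involution

open Module End

variable {K V : Type*} [Field K] [AddCommGroup V] [Module K V]

lemma eigenspace_one_inf_sup_eigenspace_neg_one_inf [NeZero (2 : K)] {f : End K V}
    {C : Submodule K V} (hf : Function.Involutive f) (hfC : ∀ x ∈ C, f x ∈ C) :
    eigenspace f 1 ⊓ C ⊔ eigenspace f (-1) ⊓ C = C := by
  refine le_antisymm (sup_le inf_le_right inf_le_right) fun x hx => Submodule.mem_sup.2 ?_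
  refine ⟨(2 : K)⁻¹ • (x + f x), ⟨?_, C.smul_mem _ (C.add_mem hx (hfC x hx))⟩,
    (2 : K)⁻¹ • (x - f x), ⟨?_, C.smul_mem _ (C.sub_mem hx (hfC x hx))⟩, ?_⟩
  · rw [SetLike.mem_coe, mem_eigenspace_iff, map_smul, map_add, hf x]
    module
  · rw [SetLike.mem_coe, mem_eigenspace_iff, map_smul, map_sub, hf x]
    module
  · rw [← smul_add, add_add_sub_cancel, ← two_smul K x, inv_smul_smul₀ two_ne_zero]

variable [FiniteDimensional K V]

lemma finrank_eigenspace_inf_le_finrank_eigenspace_neg_inf {f g : End K V} {C : Submodule K V}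
    (hgC : ∀ x ∈ C, g x ∈ C) (hg : Function.Injective g) (hfg : ∀ x ∈ C, f (g x) = -g (f x))
    (μ : K) : finrank K ↥(eigenspace f μ ⊓ C) ≤ finrank K ↥(eigenspace f (-μ) ⊓ C) := by
  rw [(Submodule.equivMapOfInjective g hg _).finrank_eq]
  refine Submodule.finrank_mono ?_
  rintro _ ⟨x, ⟨hx, hxC⟩, rfl⟩
  refine ⟨?_, hgC x hxC⟩
  rw [SetLike.mem_coe, mem_eigenspace_iff, hfg x hxC, mem_eigenspace_iff.1 hx, map_smul, neg_smul]

lemma two_mul_finrank_eigenspace_neg_one_inf [NeZero (2 : K)] {f g : End K V} {C : Submodule K V}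
    (hf : Function.Involutive f) (hfC : ∀ x ∈ C, f x ∈ C) (hg : Function.Injective g)
    (hgC : ∀ x ∈ C, g x ∈ C) (hfg : ∀ x ∈ C, f (g x) = -g (f x)) :
    2 * finrank K ↥(eigenspace f (-1) ⊓ C) = finrank K C := by
  have hne : (1 : K) ≠ -1 := fun h => two_ne_zero (α := K) (by linear_combination h)
  have hinf : (eigenspace f 1 ⊓ C) ⊓ (eigenspace f (-1) ⊓ C) = ⊥ :=
    ((disjoint_genEigenspace f hne 1 1).mono inf_le_left inf_le_left).eq_bot
  have hdim := Submodule.finrank_sup_add_finrank_inf_eq (eigenspace f 1 ⊓ C)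
    (eigenspace f (-1) ⊓ C)
  rw [eigenspace_one_inf_sup_eigenspace_neg_one_inf hf hfC, hinf, finrank_bot] at hdim
  have hle := finrank_eigenspace_inf_le_finrank_eigenspace_neg_inf hgC hg hfg 1
  have hge := finrank_eigenspace_inf_le_finrank_eigenspace_neg_inf hgC hg hfg (-1)
  rw [neg_neg] at hge
  lia

end Involution

section FormAdjoint

open Module

variable {K n : Type*} [Field K] [Fintype n] [DecidableEq n] {ε α β : K} {J A N : Matrix n n K}

/-- The adjoint `X ↦ J⁻¹ Xᵀ J` of a matrix for the bilinear form `(v, w) ↦ vᵀ J w`, as a linear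
map. Mathlib's `J⁻¹` is `0` for singular `J`, so this is the adjoint only when `J` is invertible. -/
def formAdjoint (J : Matrix n n K) : Module.End K (Matrix n n K) :=
  LinearMap.mulLeft K J⁻¹ ∘ₗ LinearMap.mulRight K J ∘ₗ (transposeLinearEquiv n n K K).toLinearMap

lemma formAdjoint_apply (J X : Matrix n n K) : formAdjoint J X = J⁻¹ * (Xᵀ * J) :=
  rfl

lemma formAdjoint_one (hJ : IsUnit J.det) : formAdjoint J 1 = 1 := by
  rw [formAdjoint_apply, transpose_one, Matrix.one_mul, nonsing_inv_mul J hJ]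

lemma formAdjoint_mul (hJ : IsUnit J.det) (X Y : Matrix n n K) :
    formAdjoint J (X * Y) = formAdjoint J Y * formAdjoint J X := by
  simp only [formAdjoint_apply, transpose_mul, Matrix.mul_assoc, mul_nonsing_inv_cancel_left J _ hJ]

lemma formAdjoint_involutive (hJ : IsUnit J.det) (hJt : Jᵀ = ε • J) :
    Function.Involutive (formAdjoint J) := by
  intro X
  have hinv : ε • (J⁻¹ᵀ * J) = 1 := by
    rw [← Matrix.mul_smul, ← hJt, ← transpose_mul, mul_nonsing_inv J hJ, transpose_one]
  calc formAdjoint J (formAdjoint J X)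
    _ = J⁻¹ * (Jᵀ * X * J⁻¹ᵀ * J) := by
      simp only [formAdjoint_apply, transpose_mul, transpose_transpose]
    _ = (J⁻¹ * J) * X * (ε • (J⁻¹ᵀ * J)) := by
      rw [hJt]
      simp only [Matrix.smul_mul, Matrix.mul_smul, Matrix.mul_assoc]
    _ = X := by rw [hinv, nonsing_inv_mul J hJ, Matrix.one_mul, Matrix.mul_one]

lemma skewAdjointMatricesSubmodule_eq_eigenspace (hJ : IsUnit J.det) :
    skewAdjointMatricesSubmodule J = End.eigenspace (formAdjoint J) (-1) := by
  ext X
  rw [mem_skewAdjointMatricesSubmodule, Matrix.IsSkewAdjoint, IsAdjointPair,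
    End.mem_eigenspace_iff, formAdjoint_apply, neg_one_smul]
  refine ⟨fun h => by rw [h, nonsing_inv_mul_cancel_left J _ hJ], fun h => ?_⟩
  rw [← h, mul_nonsing_inv_cancel_left J _ hJ]

lemma formAdjoint_mul_self_of_isometry (hJ : IsUnit J.det) (hA : Aᵀ * J * A = J) :
    formAdjoint J A * A = 1 := by
  rw [formAdjoint_apply, Matrix.mul_assoc, hA, nonsing_inv_mul J hJ]

lemma self_mul_formAdjoint_of_isometry (hJ : IsUnit J.det) (hA : Aᵀ * J * A = J) :
    A * formAdjoint J A = 1 :=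
  mul_eq_one_comm.1 (formAdjoint_mul_self_of_isometry hJ hA)

lemma commute_formAdjoint_iff {X : Matrix n n K} (hJ : IsUnit J.det) (hA : Aᵀ * J * A = J) :
    Commute (formAdjoint J A) X ↔ Commute A X := by
  let u : (Matrix n n K)ˣ := ⟨A, formAdjoint J A, self_mul_formAdjoint_of_isometry hJ hA,
    formAdjoint_mul_self_of_isometry hJ hA⟩
  exact Commute.units_inv_left_iff (u := u)

lemma commute_self_formAdjoint {X : Matrix n n K} (hJ : IsUnit J.det) (hJt : Jᵀ = ε • J)
    (hA : Aᵀ * J * A = J) (hX : Commute A X) : Commute A (formAdjoint J X) := by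
  have h := ((commute_formAdjoint_iff hJ hA).2 hX).eq
  have := congrArg (formAdjoint J) h
  rw [formAdjoint_mul hJ, formAdjoint_mul hJ, formAdjoint_involutive hJ hJt] at this
  exact this.symm

lemma two_mul_finrank_skewAdjoint_inf_centralizer [NeZero (2 : K)] (hJ : IsUnit J.det)
    (hJt : Jᵀ = ε • J) (hA : Aᵀ * J * A = J) (hA1 : IsUnit (A ^ 2 - 1)) :
    2 * finrank K ↥(skewAdjointMatricesSubmodule J ⊓
        (Subalgebra.centralizer K {A}).toSubmodule) =
      finrank K (Subalgebra.centralizer K {A}) := by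
  set C := (Subalgebra.centralizer K {A}).toSubmodule with hC
  have mem_C {X : Matrix n n K} : X ∈ C ↔ Commute A X := by
    simp [hC, Subalgebra.mem_centralizer_iff, Commute, SemiconjBy]
  have hadjC (X) (hX : X ∈ C) : formAdjoint J X ∈ C :=
    mem_C.2 (commute_self_formAdjoint hJ hJt hA (mem_C.1 hX))
  set D := A - formAdjoint J A with hD
  have hDX {X : Matrix n n K} (hX : X ∈ C) : Commute D X :=
    (mem_C.1 hX).sub_left ((commute_formAdjoint_iff hJ hA).2 (mem_C.1 hX))
  have hDadj : formAdjoint J D = -D := by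
    rw [hD, map_sub, formAdjoint_involutive hJ hJt, neg_sub]
  have hDunit : IsUnit (A * D) := by
    rwa [hD, mul_sub, self_mul_formAdjoint_of_isometry hJ hA, ← sq]
  have hDC : D ∈ C := mem_C.2 ((Commute.refl A).sub_right (mem_C.1 (hadjC A (mem_C.2 rfl))))
  rw [skewAdjointMatricesSubmodule_eq_eigenspace hJ]
  refine two_mul_finrank_eigenspace_neg_one_inf (g := LinearMap.mulLeft K D)
    (formAdjoint_involutive hJ hJt) hadjC ?_ (fun X hX => ?_) (fun X hX => ?_)
  · exact fun X Y hXY => hDunit.mul_left_cancel <| by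
      rw [mul_assoc, mul_assoc]
      exact congrArg (A * ·) hXY
  · exact mem_C.2 ((mem_C.1 hDC).mul_right (mem_C.1 hX))
  · rw [LinearMap.mulLeft_apply, LinearMap.mulLeft_apply, formAdjoint_mul hJ, hDadj, mul_neg,
      (hDX (hadjC X hX)).eq]

lemma eq_zero_of_mul_eq_smul (hJ : IsUnit J.det) (hA : Aᵀ * J * A = J) (hN : formAdjoint J N = N)
    (hcomm : Commute A N) (h : A * N = α • N) (hα : α ^ 2 ≠ 1) : N = 0 := by
  have hadj : formAdjoint J A * N = α • N := by
    have := congrArg (formAdjoint J) h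
    rwa [formAdjoint_mul hJ, map_smul, hN,
      ← ((commute_formAdjoint_iff hJ hA).2 hcomm).eq] at this
  have hsq : N = α ^ 2 • N :=
    calc N = A * (formAdjoint J A * N) := by
          rw [← Matrix.mul_assoc, self_mul_formAdjoint_of_isometry hJ hA, Matrix.one_mul]
      _ = α ^ 2 • N := by rw [hadj, Matrix.mul_smul, h, smul_smul, sq]
  have : (1 - α ^ 2) • N = 0 := by rw [sub_smul, one_smul, ← hsq, sub_self]
  exact (smul_eq_zero.1 this).resolve_left (sub_ne_zero.2 hα.symm)

lemma mul_sq_ne_zero_of_isometry (hJ : IsUnit J.det) (hJt : Jᵀ = ε • J) (hA : Aᵀ * J * A = J)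
    (hαβ : α * β = 1) (hβ : β ^ 2 ≠ 1) (h : (A - α • 1) * (A - β • 1) ≠ 0) :
    (A - α • 1) * (A - β • 1) ^ 2 ≠ 0 := by
  set N := A + formAdjoint J A - (α + β) • 1 with hN
  have hAN : (A - α • 1) * (A - β • 1) = A * N := by
    have h1 := self_mul_formAdjoint_of_isometry hJ hA
    simp only [hN, mul_sub, mul_add, sub_mul, h1, mul_one, one_mul, smul_mul_assoc, mul_smul_comm,
      smul_smul, smul_sub, mul_comm β α, hαβ]
    module
  have hcomm : Commute A N :=
    ((Commute.refl A).add_right (commute_self_formAdjoint hJ hJt hA (Commute.refl A))).sub_right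
      ((Commute.one_right A).smul_right _)
  have hself : formAdjoint J N = N := by
    rw [hN, map_sub, map_add, map_smul, formAdjoint_one hJ, formAdjoint_involutive hJ hJt,
      add_comm (formAdjoint J A)]
  intro h0
  have hANβ : A * N = β • N := by
    have h1 : A * (N * (A - β • 1)) = 0 := by
      rw [← mul_assoc, ← hAN, mul_assoc, ← sq, h0]
    have h2 : N * (A - β • 1) = 0 :=
      (IsUnit.of_mul_eq_one _ (self_mul_formAdjoint_of_isometry hJ hA)).mul_right_eq_zero.1 h1
    rw [mul_sub, mul_smul_comm, mul_one, sub_eq_zero] at h2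
    rw [hcomm.eq, h2]
  exact h (by rw [hAN, eq_zero_of_mul_eq_smul hJ hA hself hcomm hANβ hβ, mul_zero])

open Polynomial in
lemma minpoly_eq_sq_of_isometry (hJ : IsUnit J.det) (hJt : Jᵀ = ε • J) (hA : Aᵀ * J * A = J)
    (hαβ : α * β = 1) (hα : α ^ 2 ≠ 1) (hβ : β ^ 2 ≠ 1)
    (h1 : (A - α • 1) ^ 2 * (A - β • 1) ^ 2 = 0) (h2 : (A - α • 1) * (A - β • 1) ≠ 0) :
    minpoly K A = (X - C α) ^ 2 * (X - C β) ^ 2 := by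
  have haeval (μ : K) : aeval A (X - C μ) = A - μ • (1 : Matrix n n K) := by
    rw [map_sub, aeval_X, aeval_C, Algebra.algebraMap_eq_smul_one]
  have hcomm : Commute (A - α • (1 : Matrix n n K)) (A - β • 1) := by
    rw [← haeval, ← haeval]
    exact (Commute.all (X - C α) (X - C β)).map (aeval A)
  refine minpoly_eq_of_forall_aeval_ne_zero
    (((monic_X_sub_C α).pow 2).mul ((monic_X_sub_C β).pow 2))
    (((Splits.X_sub_C α).pow 2).mul ((Splits.X_sub_C β).pow 2))
    (by simpa only [map_mul, map_pow, haeval] using h1) fun μ r hr => ?_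
  have hμ : μ = α ∨ μ = β := by
    have := congrArg (eval μ) hr
    simpa [sub_eq_zero] using this
  rcases hμ with rfl | rfl
  · have hr' : r = (X - C μ) * (X - C β) ^ 2 :=
      mul_left_cancel₀ (X_sub_C_ne_zero μ) (by rw [← hr]; ring)
    rw [hr', map_mul, map_pow, haeval, haeval]
    exact mul_sq_ne_zero_of_isometry hJ hJt hA hαβ hβ h2
  · have hr' : r = (X - C μ) * (X - C α) ^ 2 :=
      mul_left_cancel₀ (X_sub_C_ne_zero μ) (by rw [← hr]; ring)
    rw [hr', map_mul, map_pow, haeval, haeval]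
    exact mul_sq_ne_zero_of_isometry hJ hJt hA (by rw [mul_comm, hαβ]) hα (hcomm.eq ▸ h2)

theorem sp4_delta_jordan_double_block_general [NeZero (2 : K)] (hn : Fintype.card n = 4)
    (hJ : IsUnit J.det) (hJt : Jᵀ = ε • J) (hA : Aᵀ * J * A = J) (hα0 : α ≠ 0) (hα : α ^ 2 ≠ 1)
    (h1 : (A - α • 1) ^ 2 * (A - α⁻¹ • 1) ^ 2 = 0) (h2 : (A - α • 1) * (A - α⁻¹ • 1) ≠ 0) :
    finrank K ↥(skewAdjointMatricesSubmodule J ⊓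
      (Subalgebra.centralizer K {A}).toSubmodule) = 2 := by
  have hαinv : α⁻¹ ^ 2 ≠ 1 := by rwa [inv_pow, Ne, inv_eq_one]
  have hmin := minpoly_eq_sq_of_isometry hJ hJt hA (mul_inv_cancel₀ hα0) hα hαinv h1 h2
  have hdeg : (minpoly K A).natDegree = Fintype.card n := by
    rw [hmin, hn]
    compute_degree!
  have hcent := finrank_matrix_centralizer_of_natDegree_minpoly hdeg
  have hhalf := two_mul_finrank_skewAdjoint_inf_centralizer hJ hJt hA
    (isUnit_sq_sub_one_of_sq_mul_sq_eq_zero hα hαinv h1)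
  lia

end FormAdjoint

lemma Omega_mul_neg_Omega : Omega * -Omega = 1 := by
  ext i j
  fin_cases i <;> fin_cases j <;> simp [Omega, Matrix.mul_apply, Fin.sum_univ_four]

lemma transpose_Omega : Omegaᵀ = (-1 : ℂ) • Omega := by
  ext i j
  fin_cases i <;> fin_cases j <;> simp [Omega]

lemma sp4cent_eq_skewAdjoint_inf_centralizer (A : Matrix (Fin 4) (Fin 4) ℂ) :
    sp4cent A =
      skewAdjointMatricesSubmodule Omega ⊓ (Subalgebra.centralizer ℂ {A}).toSubmodule := by
  ext X
  change Xᵀ * Omega + Omega * X = 0 ∧ A * X = X * A ↔ _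
  simp [Matrix.IsSkewAdjoint, IsAdjointPair, Subalgebra.mem_centralizer_iff,
    eq_neg_iff_add_eq_zero]

/-- If `A ∈ Sp₄(ℂ)` has Jordan form `αJ(2) ⊕ α⁻¹J(2)` (denoted `[[α] ⊕ [α]]`) with
`α² ≠ 1`, i.e. `(A − αI)²(A − α⁻¹I)² = 0` while `(A − αI)(A − α⁻¹I) ≠ 0`, then its
centralizer in `𝔰𝔭₄(ℂ)` has dimension `2`; equivalently `δ(A) = 10 − dim c(A) = 8`. -/
theorem sp4_delta_jordan_double_block (α : ℂ) (hα0 : α ≠ 0) (hα1 : α ^ 2 ≠ 1)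
    (A : Matrix (Fin 4) (Fin 4) ℂ) (hUnit : IsUnit A)
    (hSp : Aᵀ * Omega * A = Omega)
    (h1 : (A - α • (1 : Matrix (Fin 4) (Fin 4) ℂ)) ^ 2 *
          (A - α⁻¹ • (1 : Matrix (Fin 4) (Fin 4) ℂ)) ^ 2 = 0)
    (h2 : (A - α • (1 : Matrix (Fin 4) (Fin 4) ℂ)) *
          (A - α⁻¹ • (1 : Matrix (Fin 4) (Fin 4) ℂ)) ≠ 0) :
    Module.finrank ℂ (sp4cent A) = 2 ∧
      (10 : ℤ) - Module.finrank ℂ (sp4cent A) = 8 := by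
  have hdim : Module.finrank ℂ (sp4cent A) = 2 := by
    rw [sp4cent_eq_skewAdjoint_inf_centralizer]
    exact sp4_delta_jordan_double_block_general (Fintype.card_fin 4)
      (isUnit_det_of_right_inverse Omega_mul_neg_Omega) transpose_Omega hSp hα0 hα1 h1 h2
  rw [hdim]
  norm_num

end
end

section
/- Converse direction of the lemma on operators in ℂ[zⁿ,ϑ]: Let m ≥ 0, P_0, …, P_m ∈ ℂ[X], μ ∈ ℂ, n ≥ 1, and assume P_i = 0 whenever n does not divide i (i.e. L = ∑_{i=0}^m z^i P_i(ϑ) lies in ℂ[zⁿ,ϑ]). Assume moreover that P_0(μ + k) ≠ 0 for every integer k ≥ 1 with n ∤ k. If f = ∑_{k≥0} A_k z^k ∈ ℂ⟦z⟧ satisfies L_μ(f) = 0, then A_k = 0 for every k with n ∤ k; that is, f ∈ ℂ⟦zⁿ⟧. -/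
noncomputable section

/-- The action of `P(ϑ + μ)` on `ℂ⟦z⟧`, sending `∑ A_k z^k` to `∑ P(μ + k) A_k z^k`.
This models the action of `P(ϑ)`, `ϑ = z d/dz`, on `z^μ · ℂ⟦z⟧`. -/
def thetaOp (P : Polynomial ℂ) (μ : ℂ) (f : PowerSeries ℂ) : PowerSeries ℂ :=
  PowerSeries.mk fun k => Polynomial.eval (μ + k) P * PowerSeries.coeff k f

/-- The action `L_μ` of the operator `L = ∑_{i=0}^m z^i P_i(ϑ)` on `z^μ · ℂ⟦z⟧`,
as an operator on `ℂ⟦z⟧`. -/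
def Lop (m : ℕ) (P : ℕ → Polynomial ℂ) (μ : ℂ) (f : PowerSeries ℂ) : PowerSeries ℂ :=
  ∑ i ∈ Finset.range (m + 1), PowerSeries.X ^ i * thetaOp (P i) μ f

theorem coeff_thetaOp (P : Polynomial ℂ) (μ : ℂ) (f : PowerSeries ℂ) (k : ℕ) :
    PowerSeries.coeff k (thetaOp P μ f) = P.eval (μ + k) * PowerSeries.coeff k f :=
  PowerSeries.coeff_mk k _

theorem thetaOp_zero (μ : ℂ) (f : PowerSeries ℂ) : thetaOp 0 μ f = 0 := by
  ext k
  simp [coeff_thetaOp]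

section

variable {m : ℕ} {P : ℕ → Polynomial ℂ} {μ : ℂ} {f : PowerSeries ℂ}

theorem coeff_Lop (k : ℕ) :
    PowerSeries.coeff k (Lop m P μ f) =
      ∑ i ∈ Finset.range (m + 1),
        if i ≤ k then PowerSeries.coeff (k - i) (thetaOp (P i) μ f) else 0 := by
  simp only [Lop, map_sum, PowerSeries.coeff_X_pow_mul']

theorem coeff_Lop_eq_eval_mul_coeff {k : ℕ}
    (h : ∀ i ≤ m, i ≠ 0 → i ≤ k → P i ≠ 0 → PowerSeries.coeff (k - i) f = 0) :
    PowerSeries.coeff k (Lop m P μ f) = (P 0).eval (μ + k) * PowerSeries.coeff k f := by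
  have higher_terms : ∀ i ∈ Finset.range (m + 1), i ≠ 0 →
      (if i ≤ k then PowerSeries.coeff (k - i) (thetaOp (P i) μ f) else 0) = 0 := by
    intro i hi hi0
    refine ite_eq_right_iff.mpr fun hik ↦ ?_
    by_cases hPi : P i = 0
    · rw [hPi, thetaOp_zero, map_zero]
    · rw [coeff_thetaOp, h i (Finset.mem_range_succ_iff.mp hi) hi0 hik hPi, mul_zero]
  rw [coeff_Lop, Finset.sum_eq_single_of_mem 0 (by simp) higher_terms, if_pos k.zero_le,
    Nat.sub_zero, coeff_thetaOp]

/-- Since `T` is stable under the shifts by `i` with `P i ≠ 0`, the recurrence for a coefficient of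
`f` at an exponent outside `T` involves only earlier coefficients at exponents outside `T`. -/
theorem Lop_solution_in_zn_general {T : Set ℕ}
    (hT : ∀ i ≤ m, P i ≠ 0 → ∀ t ∈ T, t + i ∈ T)
    (hP0 : ∀ k ∉ T, (P 0).eval (μ + k) ≠ 0)
    (hL : ∀ k ∉ T, PowerSeries.coeff k (Lop m P μ f) = 0) :
    ∀ k ∉ T, PowerSeries.coeff k f = 0 := by
  intro k
  induction k using Nat.strong_induction_on with
  | _ k ih =>
    intro hk
    have earlier_coeff : ∀ i ≤ m, i ≠ 0 → i ≤ k → P i ≠ 0 →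
        PowerSeries.coeff (k - i) f = 0 := by
      intro i him hi0 hik hPi
      have hki : k - i ∉ T := fun hmem ↦ hk (Nat.sub_add_cancel hik ▸ hT i him hPi _ hmem)
      exact ih (k - i) (by omega) hki
    have recurrence : (P 0).eval (μ + k) * PowerSeries.coeff k f = 0 := by
      rw [← coeff_Lop_eq_eval_mul_coeff earlier_coeff, hL k hk]
    exact (mul_eq_zero.mp recurrence).resolve_left (hP0 k hk)

end

/-- **Converse direction of the lemma on operators in `ℂ[zⁿ, ϑ]`.** Suppose
`L = ∑_{i=0}^m z^i P_i(ϑ)` lies in `ℂ[zⁿ, ϑ]`, i.e. `P_i = 0` whenever `n ∤ i`, and that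
`P_0(μ + k) ≠ 0` for every `k ≥ 1` with `n ∤ k`. If `f = ∑ A_k z^k` satisfies
`L_μ(f) = 0`, then `A_k = 0` for all `k` with `n ∤ k`; that is, `f ∈ ℂ⟦zⁿ⟧`. -/
theorem Lop_solution_in_zn (m : ℕ) (P : ℕ → Polynomial ℂ) (μ : ℂ)
    (n : ℕ) (hn : 1 ≤ n)
    (hP : ∀ i ≤ m, ¬ n ∣ i → P i = 0)
    (hP0 : ∀ k : ℕ, 1 ≤ k → ¬ n ∣ k → Polynomial.eval (μ + (k : ℂ)) (P 0) ≠ 0)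
    (A : ℕ → ℂ)
    (hL : Lop m P μ (PowerSeries.mk A) = 0) :
    ∀ k : ℕ, ¬ n ∣ k → A k = 0 := by
  intro k hk
  have pos_of_not_dvd {j : ℕ} (hj : ¬ n ∣ j) : 1 ≤ j :=
    Nat.pos_of_ne_zero fun h ↦ hj (h ▸ dvd_zero n)
  have shift_mem (i : ℕ) (hi : i ≤ m) (hPi : P i ≠ 0) (t : ℕ) (ht : n ∣ t) : n ∣ t + i :=
    dvd_add ht (not_imp_comm.mp (hP i hi) hPi)
  rw [← PowerSeries.coeff_mk k A]
  exact Lop_solution_in_zn_general (T := {j | n ∣ j}) shift_mem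
    (fun j hj ↦ hP0 j (pos_of_not_dvd hj) hj) (fun j _ ↦ by rw [hL, map_zero]) k hk

end
end

section
/- The middle convolution preserves the index of rigidity: Let n ≥ 1, r ≥ 1 and let A = (A_1, …, A_r) ∈ GL_n(ℂ)^r be an irreducible tuple such that, in case n = 1, at least two of the A_i differ from the identity. Then for every λ ∈ ℂ with λ ∉ {0, 1}, one has i(A) = i(MC_λ(A)), where for a tuple M = (M_1, …, M_r) of automorphisms of a finite-dimensional complex vector space W with N = dim_ℂ W, the index of rigidity is i(M) := (r−1)·N² + 2 − ∑_{i=1}^{r+1} dim_ℂ{X ∈ End_ℂ(W) : X M_i = M_i X}, with M_{r+1} := (M_1 ⋯ M_r)^{-1}. -/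
open Matrix

noncomputable section

/-- The block matrix `B_k` of the convolution construction: it agrees with the identity
in all block rows except the `k`-th, whose block entries are
`(λ(A_1 − I), …, λ(A_{k−1} − I), λA_k, A_{k+1} − I, …, A_r − I)`. -/
def Bmat {n r : ℕ} (A : Fin r → Matrix (Fin n) (Fin n) ℂ) (lam : ℂ) (k : Fin r) :
    Matrix (Fin r × Fin n) (Fin r × Fin n) ℂ :=
  Matrix.of fun p q =>
    if p.1 = k then
      (if q.1 < k then lam * (A q.1 - 1) p.2 q.2
       else if q.1 = k then lam * (A k) p.2 q.2
       else (A q.1 - 1) p.2 q.2)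
    else (1 : Matrix (Fin r × Fin n) (Fin r × Fin n) ℂ) p q

/-- Projection onto the `k`-th block of `(ℂⁿ)^r`. -/
def blockProj {n r : ℕ} (k : Fin r) : ((Fin r × Fin n) → ℂ) →ₗ[ℂ] (Fin n → ℂ) :=
  LinearMap.funLeft ℂ ℂ fun b => (k, b)

/-- `K = K_1 ⊕ ⋯ ⊕ K_r`, where `K_k` is the `k`-th block copy of `ker (A_k − I)`. -/
def Ksub {n r : ℕ} (A : Fin r → Matrix (Fin n) (Fin n) ℂ) :
    Submodule ℂ ((Fin r × Fin n) → ℂ) :=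
  ⨅ k : Fin r, LinearMap.ker (((A k - 1).mulVecLin).comp (blockProj k))

/-- `L = ∩_k ker (B_k − I)`. -/
def Lsub {n r : ℕ} (A : Fin r → Matrix (Fin n) (Fin n) ℂ) (lam : ℂ) :
    Submodule ℂ ((Fin r × Fin n) → ℂ) :=
  ⨅ k : Fin r, LinearMap.ker ((Bmat A lam k).mulVecLin - LinearMap.id)

/-- The underlying space `V = (ℂⁿ)^r / (K + L)` of the middle convolution `MC_λ(A)`. -/
abbrev MCspace {n r : ℕ} (A : Fin r → Matrix (Fin n) (Fin n) ℂ) (lam : ℂ) :=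
  ((Fin r × Fin n) → ℂ) ⧸ (Ksub A ⊔ Lsub A lam)

/-- A tuple of endomorphisms of `W` is irreducible if the only subspaces of `W` invariant
under every member are `0` and `W`. -/
def IrredEndos {W : Type*} [AddCommGroup W] [Module ℂ W] {r : ℕ}
    (M : Fin r → W →ₗ[ℂ] W) : Prop :=
  ∀ U : Submodule ℂ W, (∀ k, ∀ v ∈ U, M k v ∈ U) → U = ⊥ ∨ U = ⊤


/-- The centralizer `{X ∈ End(W) : X f = f X}` of an endomorphism `f`, as a subspace. -/
def centEnd {W : Type*} [AddCommGroup W] [Module ℂ W] (f : Module.End ℂ W) :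
    Submodule ℂ (Module.End ℂ W) where
  carrier := {X | X * f = f * X}
  add_mem' := by
    intro X Y hX hY
    simp only [Set.mem_setOf_eq] at *
    rw [add_mul, mul_add, hX, hY]
  zero_mem' := by
    simp only [Set.mem_setOf_eq, zero_mul, mul_zero]
  smul_mem' := by
    intro c X hX
    simp only [Set.mem_setOf_eq] at *
    rw [smul_mul_assoc, mul_smul_comm, hX]

/-- The index of rigidity of a tuple `M = (M_1, …, M_r)` of automorphisms of a
finite-dimensional complex vector space `W` of dimension `N`:
`i(M) = (r − 1)·N² + 2 − ∑_{i=1}^{r+1} dim {X : X M_i = M_i X}`, where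
`M_{r+1} = (M_1 ⋯ M_r)⁻¹`. -/
def rigIdx {W : Type*} [AddCommGroup W] [Module ℂ W] {r : ℕ}
    (M : Fin r → Module.End ℂ W) : ℤ :=
  ((r : ℤ) - 1) * (Module.finrank ℂ W : ℤ) ^ 2 + 2
    - (∑ k : Fin r, (Module.finrank ℂ (centEnd (M k)) : ℤ))
    - (Module.finrank ℂ (centEnd (Ring.inverse ((List.ofFn M).prod))) : ℤ)

/-! Write `K` and `L` for the two subspaces by which `T^r` is divided, `T = ℂⁿ`, and
`P = a_1 ⋯ a_r`. The centralizer of an endomorphism `f` restricts onto that of `f|_{im f}`, with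
kernel `Hom (coker f, ker f)`, so `dim Z(f) = dim Z(f|_{im f}) + (dim ker f)²`. Irreducibility makes
the `k`-th inclusion `T → T^r → V` induce an isomorphism `im (a_k - 1) ≃ im (M_k - 1)` through which
`M_k - 1` acts as `λ (a_k - 1) + (λ - 1)`, and the map `t ↦ (a_2 ⋯ a_r t, …, t)` induce an
isomorphism `im (λ P - 1) ≃ im (M_1 ⋯ M_r - λ)` through which `M_1 ⋯ M_r - λ` acts as
`(λ P - 1) + (1 - λ)`. Hence each of the `r + 1` centralizer dimensions changes by
`d² + 2 d dim ker`, where `d = dim V - dim T` and `ker` is that of `a_k - 1` or `λ P - 1`. Since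
`K ≃ ⨁ ker (a_k - 1)`, `L ≃ ker (λ P - 1)` and `K ∩ L = 0`, these kernels have total dimension
`r dim T - dim V`, and with this value the changes cancel. -/

open Module (finrank finrank_linearMap)

section Centralizer

variable {K V W : Type*} [Field K] [AddCommGroup V] [Module K V] [AddCommGroup W] [Module K W]

/-- The dimension of the centralizer `{X : X f = f X}` of an endomorphism. -/
def centralizerDim (f : Module.End K V) : ℕ :=
  finrank K (Subalgebra.centralizer K {f})

lemma mem_centralizer_singleton_iff {f X : Module.End K V} :
    X ∈ Subalgebra.centralizer K {f} ↔ ∀ v, f (X v) = X (f v) := by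
  simp only [Subalgebra.mem_centralizer_iff, Set.mem_singleton_iff, forall_eq]
  exact LinearMap.ext_iff

lemma centralizerDim_smul_add_smul_one (f : Module.End K V) {c : K} (hc : c ≠ 0) (d : K) :
    centralizerDim (c • f + d • 1) = centralizerDim f := by
  have h : Subalgebra.centralizer K {c • f + d • 1} = Subalgebra.centralizer K {f} := by
    ext X
    simp [mem_centralizer_singleton_iff, smul_right_inj hc]
  rw [centralizerDim, h, centralizerDim]

lemma centralizerDim_sub_smul_one (f : Module.End K V) (d : K) :
    centralizerDim (f - d • 1) = centralizerDim f := by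
  simpa [sub_eq_add_neg] using centralizerDim_smul_add_smul_one f one_ne_zero (-d)

lemma centralizerDim_smul_sub_one (f : Module.End K V) {c : K} (hc : c ≠ 0) :
    centralizerDim (c • f - 1) = centralizerDim f := by
  simpa [sub_eq_add_neg] using centralizerDim_smul_add_smul_one f hc (-1)

lemma centralizerDim_conj (e : V ≃ₗ[K] W) (f : Module.End K V) :
    centralizerDim (e.conj f) = centralizerDim f := by
  have h : (Subalgebra.toSubmodule (Subalgebra.centralizer K {f})).map e.conj.toLinearMap =
      Subalgebra.toSubmodule (Subalgebra.centralizer K {e.conj f}) := by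
    ext X
    have hX (v : V) : e.conj.symm X v = e.symm (X (e v)) := rfl
    rw [Submodule.map_equiv_eq_comap_symm]
    simp [mem_centralizer_singleton_iff, hX, e.surjective.forall, e.eq_symm_apply]
  exact (congrArg (fun S : Submodule K _ ↦ finrank K S) h).symm.trans (e.conj.finrank_map_eq _)

/-- The endomorphism that `f` induces on its own range. -/
def endRange (f : Module.End K V) : Module.End K f.range :=
  f.restrict fun x _ ↦ f.mem_range_self x

/-- The restriction map from the centralizer of `f` to that of `f` on its range. -/
def restrictCentralizer (f : Module.End K V) :
    Subalgebra.centralizer K {f} →ₗ[K] Subalgebra.centralizer K {endRange f} where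
  toFun X := ⟨X.1.restrict <| by
      rintro _ ⟨v, rfl⟩
      exact ⟨X.1 v, mem_centralizer_singleton_iff.1 X.2 v⟩,
    mem_centralizer_singleton_iff.2 fun u ↦
      Subtype.ext (mem_centralizer_singleton_iff.1 X.2 u)⟩
  map_add' _ _ := rfl
  map_smul' _ _ := rfl

lemma restrictCentralizer_surjective (f : Module.End K V) :
    Function.Surjective (restrictCentralizer f) := by
  rintro ⟨Y, hY⟩
  rw [mem_centralizer_singleton_iff] at hY
  obtain ⟨σ, hσ⟩ := f.rangeRestrict.exists_rightInverse_of_surjective f.range_rangeRestrict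
  obtain ⟨τ, hτ⟩ := f.range.subtype.exists_leftInverse_of_injective f.range.ker_subtype
  have hfσ (u : f.range) : f (σ u) = u := congrArg Subtype.val (LinearMap.congr_fun hσ u)
  have hτf (u : f.range) : τ u = u := LinearMap.congr_fun hτ u
  -- `Y τ` extends `Y`; the other terms lie over it so that `f X = Y f`.
  let X : Module.End K V := f.range.subtype ∘ₗ Y ∘ₗ τ
    + σ ∘ₗ (Y ∘ₗ f.rangeRestrict - endRange f ∘ₗ Y ∘ₗ τ)
  have hXrange (u : f.range) : X u = Y u := by
    have : f.rangeRestrict u = endRange f u := rfl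
    simp [X, hτf, hY, this]
  have hfX (v : V) : f (X v) = Y (f.rangeRestrict v) := by
    have (u : f.range) : (endRange f u : V) = f u := rfl
    simp [X, hfσ, this]
  refine ⟨⟨X, mem_centralizer_singleton_iff.2 fun v ↦ ?_⟩, ?_⟩
  · exact (hfX v).trans (hXrange (f.rangeRestrict v)).symm
  · ext u
    exact hXrange u

lemma mem_ker_restrictCentralizer_iff {f : Module.End K V} {X : Subalgebra.centralizer K {f}} :
    X ∈ (restrictCentralizer f).ker ↔ ∀ v, X.1 (f v) = 0 := by
  rw [LinearMap.mem_ker]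
  refine ⟨fun h v ↦ congrArg Subtype.val (LinearMap.congr_fun (congrArg Subtype.val h)
    (f.rangeRestrict v)), fun h ↦ ?_⟩
  ext ⟨_, v, rfl⟩
  exact h v

lemma quotient_range_mk_apply (f : Module.End K V) (v : V) :
    (Submodule.Quotient.mk (f v) : V ⧸ f.range) = 0 :=
  (Submodule.Quotient.mk_eq_zero _).2 (f.mem_range_self v)

/-- An endomorphism in the centralizer of `f` restricts to `0` on `range f` exactly when it kills
`range f` and takes values in `ker f`. -/
def kerRestrictCentralizerEquiv (f : Module.End K V) :
    (restrictCentralizer f).ker ≃ₗ[K] (V ⧸ f.range) →ₗ[K] f.ker where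
  toFun X := f.range.liftQ (X.1.1.codRestrict f.ker fun v ↦ by
      rw [LinearMap.mem_ker, mem_centralizer_singleton_iff.1 X.1.2,
        mem_ker_restrictCentralizer_iff.1 X.2]) <| by
    rintro _ ⟨v, rfl⟩
    exact Subtype.ext (mem_ker_restrictCentralizer_iff.1 X.2 v)
  invFun Z := ⟨⟨f.ker.subtype ∘ₗ Z ∘ₗ f.range.mkQ, mem_centralizer_singleton_iff.2 fun v ↦ by
      simp [quotient_range_mk_apply]⟩,
    mem_ker_restrictCentralizer_iff.2 fun v ↦ by simp [quotient_range_mk_apply]⟩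
  map_add' _ _ := by ext; rfl
  map_smul' _ _ := by ext; rfl
  left_inv _ := rfl
  right_inv _ := by ext; rfl

variable [FiniteDimensional K V] [FiniteDimensional K W]

theorem centralizerDim_eq_endRange_add_sq (f : Module.End K V) :
    centralizerDim f = centralizerDim (endRange f) + finrank K f.ker ^ 2 := by
  have hquot : finrank K (V ⧸ f.range) = finrank K f.ker := by
    have := f.range.finrank_quotient_add_finrank
    have := f.finrank_range_add_finrank_ker
    omega
  have hrank := LinearMap.finrank_range_add_finrank_ker (K := K)
    (V := Subalgebra.centralizer K {f}) (V₂ := Subalgebra.centralizer K {endRange f})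
    (restrictCentralizer f)
  rw [LinearMap.range_eq_top.2 (restrictCentralizer_surjective f), finrank_top,
    (kerRestrictCentralizerEquiv f).finrank_eq, finrank_linearMap, hquot, ← sq] at hrank
  exact hrank.symm

/-- The map `φ` identifies the range of `f` with that of `g`, so that `g` acts there as
`c • f + d • 1`. -/
theorem centralizerDim_eq_of_intertwines {f : Module.End K V} {g : Module.End K W}
    (φ : V →ₗ[K] W) (hker : φ.ker = f.ker) (hrange : φ.range = g.range) {c d : K} (hc : c ≠ 0)
    (hφ : g ∘ₗ φ = φ ∘ₗ (c • f + d • 1)) :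
    (centralizerDim g : ℤ) = centralizerDim f + ((finrank K W : ℤ) - finrank K V) ^ 2
      + 2 * ((finrank K W : ℤ) - finrank K V) * finrank K f.ker := by
  let e : f.range ≃ₗ[K] g.range := f.quotKerEquivRange.symm ≪≫ₗ
    Submodule.quotEquivOfEq _ _ hker.symm ≪≫ₗ φ.quotKerEquivRange ≪≫ₗ LinearEquiv.ofEq _ _ hrange
  have he (v : V) : (e (f.rangeRestrict v) : W) = φ v := by
    have : f.quotKerEquivRange.symm (f.rangeRestrict v) = f.ker.mkQ v :=
      f.quotKerEquivRange_symm_apply_image v (f.mem_range_self v)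
    simp [e, this]
  have hconj : endRange g = e.conj (c • endRange f + d • 1) := by
    ext w
    obtain ⟨⟨_, v, rfl⟩, rfl⟩ := e.surjective w
    have hsmul : (c • endRange f + d • 1) (f.rangeRestrict v)
        = f.rangeRestrict ((c • f + d • 1) v) := by
      ext; simp [endRange]
    calc g (e (f.rangeRestrict v)) = φ ((c • f + d • 1) v) := by
          rw [he]; exact LinearMap.congr_fun hφ v
      _ = e ((c • endRange f + d • 1) (f.rangeRestrict v)) := by rw [hsmul, he]
      _ = e.conj (c • endRange f + d • 1) (e (f.rangeRestrict v)) := by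
          rw [LinearEquiv.conj_apply_apply, e.symm_apply_apply]
  have hkerdim : (finrank K g.ker : ℤ) = finrank K W - finrank K V + finrank K f.ker := by
    have hf := f.finrank_range_add_finrank_ker
    have hg := g.finrank_range_add_finrank_ker
    have := e.finrank_eq
    omega
  rw [centralizerDim_eq_endRange_add_sq g, centralizerDim_eq_endRange_add_sq f, hconj,
    centralizerDim_conj, centralizerDim_smul_add_smul_one _ hc]
  push_cast
  rw [hkerdim]
  ring

end Centralizer

section TailProduct

variable {G : Type*} [Monoid G] {r : ℕ}

/-- The product `a_{m+1} ⋯ a_r` of the members of the tuple `a = (a_1, …, a_r)` after the first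
`m`. -/
def tailProd (a : Fin r → G) (m : ℕ) : G :=
  ((List.ofFn a).drop m).prod

lemma tailProd_zero (a : Fin r → G) : tailProd a 0 = (List.ofFn a).prod := by
  simp [tailProd]

lemma tailProd_self (a : Fin r → G) : tailProd a r = 1 := by
  rw [tailProd, List.drop_of_length_le (by simp), List.prod_nil]

lemma tailProd_eq_mul_succ (a : Fin r → G) {m : ℕ} (hm : m < r) :
    tailProd a m = a ⟨m, hm⟩ * tailProd a (m + 1) := by
  rw [tailProd, List.drop_eq_getElem_cons (by simpa using hm)]
  simp [tailProd]

end TailProduct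

section Convolution

variable {R T : Type*} [CommRing R] [AddCommGroup T] [Module R T] {r : ℕ}
  (a : Fin r → Module.End R T) (lam : R)

/-- The map `v ↦ ∑_{j > m} (a_j - 1) v_j`, where the members of the tuple are counted from `1`. -/
def tailSum (m : ℕ) : (Fin r → T) →ₗ[R] T :=
  ∑ j : Fin r, if m ≤ (j : ℕ) then (a j - 1) ∘ₗ LinearMap.proj j else 0

lemma tailSum_apply (m : ℕ) (v : Fin r → T) :
    tailSum a m v = ∑ j : Fin r, if m ≤ (j : ℕ) then a j (v j) - v j else 0 := by
  simp only [tailSum, LinearMap.sum_apply]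
  refine Finset.sum_congr rfl fun j _ ↦ ?_
  split_ifs <;> rfl

lemma tailSum_self : tailSum a r = 0 := by
  refine Finset.sum_eq_zero fun j _ ↦ if_neg (by omega)

lemma tailSum_eq_add_succ {m : ℕ} (hm : m < r) (v : Fin r → T) :
    tailSum a m v = a ⟨m, hm⟩ (v ⟨m, hm⟩) - v ⟨m, hm⟩ + tailSum a (m + 1) v := by
  simp only [tailSum_apply]
  rw [← Finset.add_sum_erase _ _ (Finset.mem_univ (⟨m, hm⟩ : Fin r)), if_pos le_rfl,
    ← Finset.add_sum_erase _ _ (Finset.mem_univ (⟨m, hm⟩ : Fin r)), if_neg (by simp), zero_add]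
  congr 1
  refine Finset.sum_congr rfl fun j hj ↦ if_congr ?_ rfl rfl
  have : (j : ℕ) ≠ m := fun h ↦ Finset.ne_of_mem_erase hj (Fin.ext h)
  omega

lemma tailSum_single (m : ℕ) (j : Fin r) (t : T) :
    tailSum a m (Pi.single j t) = if m ≤ (j : ℕ) then a j t - t else 0 := by
  rw [tailSum_apply,
    Finset.sum_eq_single j (fun i _ hi ↦ by simp [Pi.single_eq_of_ne hi]) (by simp)]
  simp

lemma tailSum_truncate {m m' : ℕ} (h : m' ≤ m) (v : Fin r → T) :
    tailSum a m' (fun j ↦ if m ≤ (j : ℕ) then v j else 0) = tailSum a m v := by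
  simp only [tailSum_apply]
  refine Finset.sum_congr rfl fun j _ ↦ ?_
  by_cases hj : m ≤ (j : ℕ)
  · simp [hj, h.trans hj]
  · simp [hj]

/-- The map `t ↦ (a_2 ⋯ a_r t, a_3 ⋯ a_r t, …, t)`. -/
def tailProdVec : T →ₗ[R] (Fin r → T) :=
  LinearMap.pi fun j ↦ tailProd a (j + 1)

lemma tailProdVec_apply (t : T) (j : Fin r) : tailProdVec a t j = tailProd a (j + 1) t := rfl

lemma tailSum_tailProdVec (t : T) {m : ℕ} (hm : m ≤ r) :
    tailSum a m (tailProdVec a t) = tailProd a m t - t := by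
  induction hm using Nat.decreasingInduction with
  | self => simp [tailSum_self, tailProd_self]
  | of_succ m hm ih =>
    rw [tailSum_eq_add_succ a hm, ih, tailProdVec_apply, tailProd_eq_mul_succ a hm]
    simp

lemma tailProdVec_injective (hr : 0 < r) : Function.Injective (tailProdVec a) := by
  intro s t h
  have hlast := congrFun h ⟨r - 1, by omega⟩
  simpa [tailProdVec_apply, Nat.sub_add_cancel hr, tailProd_self] using hlast

/-- The `k`-th row `(λ(a_1 - 1), …, λ(a_{k-1} - 1), λ a_k - 1, a_{k+1} - 1, …, a_r - 1)` of
`B_k - 1`, written in terms of tail sums. -/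
def convolutionRow (k : Fin r) : (Fin r → T) →ₗ[R] T :=
  lam • tailSum a 0 + (1 - lam) • tailSum a (k + 1) + (lam - 1) • LinearMap.proj k

lemma convolutionRow_apply (k : Fin r) (v : Fin r → T) :
    convolutionRow a lam k v
      = lam • tailSum a 0 v + (1 - lam) • tailSum a (k + 1) v + (lam - 1) • v k := rfl

lemma convolutionRow_single_self (k : Fin r) (t : T) :
    convolutionRow a lam k (Pi.single k t) = lam • a k t - t := by
  simp only [convolutionRow_apply, tailSum_single, Nat.zero_le, if_true, Pi.single_eq_same,
    Nat.not_succ_le_self, if_false]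
  module

lemma convolutionRow_single_of_lt {j k : Fin r} (h : j < k) (t : T) :
    convolutionRow a lam k (Pi.single j t) = lam • (a j t - t) := by
  have : ¬ (k : ℕ) + 1 ≤ j := by omega
  simp [convolutionRow_apply, tailSum_single, this, Pi.single_eq_of_ne h.ne']

lemma convolutionRow_single_of_gt {j k : Fin r} (h : k < j) (t : T) :
    convolutionRow a lam k (Pi.single j t) = a j t - t := by
  have : (k : ℕ) + 1 ≤ j := h
  simp only [convolutionRow_apply, tailSum_single, this, Nat.zero_le, if_true,
    Pi.single_eq_of_ne h.ne]
  module

lemma convolutionRow_tailProdVec (k : Fin r) (t : T) :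
    convolutionRow a lam k (tailProdVec a t) = lam • tailProd a 0 t - t := by
  rw [convolutionRow_apply, tailSum_tailProdVec a t (Nat.zero_le r),
    tailSum_tailProdVec a t k.isLt, tailProdVec_apply]
  module

/-- The convolution matrix `B_k`, as an endomorphism of `T^r`. -/
def convolution (k : Fin r) : Module.End R (Fin r → T) :=
  1 + LinearMap.single R (fun _ ↦ T) k ∘ₗ convolutionRow a lam k

lemma convolution_apply (k : Fin r) (v : Fin r → T) :
    convolution a lam k v = v + Pi.single k (convolutionRow a lam k v) := rfl

lemma convolution_surjective {k : Fin r} (ha : Function.Surjective (a k)) (hlam : IsUnit lam) :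
    Function.Surjective (convolution a lam k) := by
  intro w
  obtain ⟨s, hs⟩ := ha (-(↑hlam.unit⁻¹ : R) • convolutionRow a lam k w)
  refine ⟨w + Pi.single k s, ?_⟩
  have hrow : convolutionRow a lam k (w + Pi.single k s) = -s := by
    rw [map_add, convolutionRow_single_self, hs, smul_smul, mul_neg, hlam.mul_val_inv]
    module
  rw [convolution_apply, hrow, add_assoc, ← Pi.single_add, add_neg_cancel, Pi.single_zero, add_zero]

lemma tailProd_convolution_apply (v : Fin r → T) {m : ℕ} (hm : m ≤ r) :
    tailProd (convolution a lam) m v = v + fun j : Fin r ↦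
      if m ≤ (j : ℕ) then ((lam - 1) • v + lam • tailProdVec a (tailSum a 0 v)) j else 0 := by
  set u := (lam - 1) • v + lam • tailProdVec a (tailSum a 0 v) with hu
  induction hm using Nat.decreasingInduction with
  | self =>
    have hlt (j : Fin r) : ¬ r ≤ (j : ℕ) := by omega
    simp only [tailProd_self, Module.End.one_apply, hlt, if_false]
    exact (add_zero v).symm
  | of_succ m hm ih =>
    have hS : tailSum a (m + 1) u = (lam - 1) • tailSum a (m + 1) v
        + lam • (tailProd a (m + 1) (tailSum a 0 v) - tailSum a 0 v) := by
      rw [hu, map_add, map_smul, map_smul, tailSum_tailProdVec a _ hm]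
    have hrow : convolutionRow a lam ⟨m, hm⟩
        (v + fun j : Fin r ↦ if m + 1 ≤ (j : ℕ) then u j else 0) = u ⟨m, hm⟩ := by
      rw [map_add, convolutionRow_apply, convolutionRow_apply, tailSum_truncate a (Nat.zero_le _),
        tailSum_truncate a le_rfl, hS, hu]
      simp only [Nat.not_succ_le_self, if_false, Pi.add_apply, Pi.smul_apply, tailProdVec_apply]
      module
    rw [tailProd_eq_mul_succ _ hm, Module.End.mul_apply, ih, convolution_apply, hrow, add_assoc]
    congr 1
    ext j
    rcases eq_or_ne j ⟨m, hm⟩ with rfl | hj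
    · simp
    · have hjm : m ≤ (j : ℕ) ↔ m + 1 ≤ (j : ℕ) := by
        have : (j : ℕ) ≠ m := fun h ↦ hj (Fin.ext h)
        omega
      simp [Pi.single_eq_of_ne hj, hjm]

theorem convolution_prod_apply (v : Fin r → T) :
    (List.ofFn (convolution a lam)).prod v = lam • (v + tailProdVec a (tailSum a 0 v)) := by
  have h := tailProd_convolution_apply a lam v (Nat.zero_le r)
  simp only [Nat.zero_le, if_true] at h
  rw [← tailProd_zero, h]
  module

end Convolution

section MiddleConvolution

variable {K T V : Type*} [Field K] [AddCommGroup T] [Module K T] [AddCommGroup V] [Module K V]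
  {r : ℕ} {a : Fin r → Module.End K T} {lam : K}

/-- The tuple obtained from `a` by multiplying its `k`-th member by the scalar `c`. -/
def twistTuple (a : Fin r → Module.End K T) (k : Fin r) (c : K) : Fin r → Module.End K T :=
  Function.update a k (c • a k)

lemma forall_twistTuple_iff {k : Fin r} {c : K} (p : Fin r → Module.End K T → Prop) :
    (∀ j, p j (twistTuple a k c j)) ↔ p k (c • a k) ∧ ∀ j ≠ k, p j (a j) :=
  Function.forall_update_iff a p

/-- Condition (∗) of Dettweiler and Reiter: no twist of `a` by a nonzero scalar in one position has
a nonzero common fixed vector. -/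
def NoTwistedInvariants (a : Fin r → Module.End K T) : Prop :=
  ∀ k c, c ≠ 0 → ⨅ j, (twistTuple a k c j - 1).ker = ⊥

/-- Condition (∗∗) of Dettweiler and Reiter, dual to (∗): no twist of `a` by a nonzero scalar in one
position acts trivially on a nonzero quotient of `T`. -/
def NoTwistedCoinvariants (a : Fin r → Module.End K T) : Prop :=
  ∀ k c, c ≠ 0 → ⨆ j, (twistTuple a k c j - 1).range = ⊤

lemma NoTwistedInvariants.eq_zero (h : NoTwistedInvariants a) {k : Fin r} {c : K} (hc : c ≠ 0)
    {t : T} (hk : c • a k t = t) (hne : ∀ j ≠ k, a j t = t) : t = 0 := by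
  rw [← Submodule.mem_bot K, ← h k c hc, Submodule.mem_iInf]
  exact (forall_twistTuple_iff fun _ b ↦ t ∈ (b - 1).ker).2
    ⟨sub_eq_zero.2 hk, fun j hj ↦ sub_eq_zero.2 (hne j hj)⟩

lemma NoTwistedInvariants.eq_zero_of_forall (h : NoTwistedInvariants a) (hr : 0 < r) {t : T}
    (ht : ∀ j, a j t = t) : t = 0 :=
  h.eq_zero (k := ⟨0, hr⟩) one_ne_zero (by rw [one_smul, ht]) fun j _ ↦ ht j

lemma NoTwistedCoinvariants.eq_top (h : NoTwistedCoinvariants a) {k : Fin r} {c : K} (hc : c ≠ 0)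
    {U : Submodule K T} (hk : ∀ t, c • a k t - t ∈ U) (hne : ∀ j ≠ k, ∀ t, a j t - t ∈ U) :
    U = ⊤ := by
  rw [← top_le_iff, ← h k c hc, iSup_le_iff]
  refine (forall_twistTuple_iff fun _ b ↦ (b - 1).range ≤ U).2 ⟨?_, fun j hj ↦ ?_⟩
  · rintro _ ⟨t, rfl⟩
    exact hk t
  · rintro _ ⟨t, rfl⟩
    exact hne j hj t

lemma tailSum_zero_surjective (h : NoTwistedCoinvariants a) (hr : 0 < r) :
    Function.Surjective (tailSum a 0) := by
  have hmem (j : Fin r) (t : T) : a j t - t ∈ (tailSum a 0).range :=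
    ⟨Pi.single j t, by simp [tailSum_single]⟩
  refine LinearMap.range_eq_top.1 (h.eq_top (k := ⟨0, hr⟩) one_ne_zero (fun t ↦ ?_)
    fun j _ ↦ hmem j)
  rw [one_smul]
  exact hmem _ t

lemma convolutionRow_surjective (h : NoTwistedCoinvariants a) (hlam : lam ≠ 0) (k : Fin r) :
    Function.Surjective (convolutionRow a lam k) := by
  refine LinearMap.range_eq_top.1 (h.eq_top (k := k) hlam (fun t ↦ ?_) fun j hj t ↦ ?_)
  · exact ⟨Pi.single k t, convolutionRow_single_self a lam k t⟩
  · rcases hj.lt_or_gt with hlt | hgt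
    · refine ⟨lam⁻¹ • Pi.single j t, ?_⟩
      rw [map_smul, convolutionRow_single_of_lt a lam hlt, inv_smul_smul₀ hlam]
    · exact ⟨Pi.single j t, convolutionRow_single_of_gt a lam hgt t⟩

/-- The subspace `K = ker (a_1 - 1) ⊕ ⋯ ⊕ ker (a_r - 1)` of `T^r`. -/
def fixedBlocks (a : Fin r → Module.End K T) : Submodule K (Fin r → T) :=
  Submodule.pi Set.univ fun k ↦ (a k - 1).ker

lemma mem_fixedBlocks_iff {v : Fin r → T} : v ∈ fixedBlocks a ↔ ∀ k, a k (v k) = v k := by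
  simp [fixedBlocks, Submodule.mem_pi, sub_eq_zero]

lemma tailSum_eq_zero_of_mem_fixedBlocks {v : Fin r → T} (hv : v ∈ fixedBlocks a) (m : ℕ) :
    tailSum a m v = 0 := by
  simp [tailSum_apply, mem_fixedBlocks_iff.1 hv]

lemma finrank_fixedBlocks [FiniteDimensional K T] :
    finrank K (fixedBlocks a) = ∑ k, finrank K (a k - 1).ker := by
  let e : fixedBlocks a ≃ₗ[K] ∀ k, (a k - 1).ker :=
    { toFun v k := ⟨v.1 k, v.2 k trivial⟩
      invFun v := ⟨fun k ↦ v k, fun k _ ↦ (v k).2⟩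
      map_add' _ _ := rfl
      map_smul' _ _ := rfl }
  rw [e.finrank_eq, Module.finrank_pi_fintype]

/-- The subspace `L` of `T^r` of common fixed vectors of the convolution matrices. -/
def commonFixed (a : Fin r → Module.End K T) (lam : K) : Submodule K (Fin r → T) :=
  ⨅ k, (convolution a lam k - 1).ker

lemma mem_commonFixed_iff {v : Fin r → T} :
    v ∈ commonFixed a lam ↔ ∀ k, convolutionRow a lam k v = 0 := by
  simp [commonFixed, convolution_apply]

theorem commonFixed_eq_map_tailProdVec (hlam : lam ≠ 1) :
    commonFixed a lam = (lam • tailProd a 0 - 1).ker.map (tailProdVec a) := by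
  have hlam' : 1 - lam ≠ 0 := sub_ne_zero.2 hlam.symm
  ext v
  rw [mem_commonFixed_iff, Submodule.mem_map]
  constructor
  · intro hv
    have hfix : (List.ofFn (convolution a lam)).prod v = v := by
      refine (MulAction.stabilizerSubmonoid (Module.End K (Fin r → T)) v).list_prod_mem
        fun b hb ↦ ?_
      obtain ⟨k, rfl⟩ := List.mem_ofFn.1 hb
      simp [MulAction.mem_stabilizerSubmonoid_iff, convolution_apply, hv]
    have hsmul : (1 - lam) • v = lam • tailProdVec a (tailSum a 0 v) := by
      rw [sub_smul, one_smul, sub_eq_iff_eq_add', ← smul_add, ← convolution_prod_apply, hfix]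
    obtain ⟨t, ht⟩ : ∃ t, (1 - lam) • t = lam • tailSum a 0 v :=
      ⟨(1 - lam)⁻¹ • lam • tailSum a 0 v, smul_inv_smul₀ hlam' _⟩
    have hQ : tailProdVec a t = v := by
      rw [← smul_right_inj hlam', ← map_smul, ht, map_smul, hsmul]
    rw [← hQ, tailSum_tailProdVec a t (Nat.zero_le r)] at ht
    refine ⟨t, ?_, hQ⟩
    calc lam • tailProd a 0 t - t = lam • (tailProd a 0 t - t) - (1 - lam) • t := by module
      _ = 0 := by rw [ht, sub_self]
  · rintro ⟨t, ht, rfl⟩ k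
    rw [convolutionRow_tailProdVec]
    exact ht

lemma disjoint_fixedBlocks_commonFixed (hlam : lam ≠ 1) :
    Disjoint (fixedBlocks a) (commonFixed a lam) := by
  rw [Submodule.disjoint_def]
  intro v hK hL
  ext k
  simpa [convolutionRow_apply, tailSum_eq_zero_of_mem_fixedBlocks hK, sub_ne_zero.2 hlam]
    using mem_commonFixed_iff.1 hL k

lemma tailProd_apply_eq_of_fixed {t : T} {m n : ℕ} (hmn : m ≤ n) (hn : n ≤ r)
    (h : ∀ j : Fin r, m ≤ j → j < n → a j (tailProdVec a t j) = tailProdVec a t j) :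
    tailProd a m t = tailProd a n t := by
  induction hmn using Nat.decreasingInduction with
  | self => rfl
  | of_succ m hm ih =>
    rw [← ih fun j hj ↦ h j (by omega), tailProd_eq_mul_succ a (hm.trans_le hn)]
    exact h ⟨m, hm.trans_le hn⟩ le_rfl hm

lemma apply_eq_self_of_tailProdVec_mem_fixedBlocks {t : T}
    (h : tailProdVec a t ∈ fixedBlocks a) (j : Fin r) : a j t = t := by
  have hj := mem_fixedBlocks_iff.1 h j
  rwa [tailProdVec_apply, tailProd_apply_eq_of_fixed j.isLt le_rfl
    fun i _ _ ↦ mem_fixedBlocks_iff.1 h i, tailProd_self] at hj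

lemma fixed_of_tailProdVec_fixed_of_ne {t : T} {k : Fin r}
    (h : ∀ j ≠ k, a j (tailProdVec a t j) = tailProdVec a t j) (ht : lam • tailProd a 0 t = t) :
    lam • a k t = t ∧ ∀ j ≠ k, a j t = t := by
  have hafter {m : ℕ} (hm : k < m) (hmr : m ≤ r) : tailProd a m t = t := by
    rw [tailProd_apply_eq_of_fixed hmr le_rfl fun i hi _ ↦ h i (by omega), tailProd_self]
    rfl
  have hbefore {m : ℕ} (hm : m ≤ k) : tailProd a m t = a k t := by
    rw [tailProd_apply_eq_of_fixed hm k.isLt.le fun i _ hi ↦ h i (by omega),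
      tailProd_eq_mul_succ a k.isLt, Module.End.mul_apply, hafter (Nat.lt_succ_self _) k.isLt]
  have hk : lam • a k t = t := by rwa [hbefore (Nat.zero_le _)] at ht
  refine ⟨hk, fun j hj ↦ ?_⟩
  have hfix := h j hj
  rw [tailProdVec_apply] at hfix
  rcases hj.lt_or_gt with hlt | hgt
  · rw [hbefore (Nat.succ_le_of_lt hlt)] at hfix
    rw [← hk, map_smul, hfix]
  · rwa [hafter (Nat.lt_succ_of_lt hgt) j.isLt] at hfix

/-- `π : T^r → V` presents `V`, with the tuple `M` of endomorphisms, as the middle convolution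
`T^r / (K + L)` of `a` with parameter `lam`. -/
structure IsMiddleConvolution (a : Fin r → Module.End K T) (lam : K) (π : (Fin r → T) →ₗ[K] V)
    (M : Fin r → Module.End K V) : Prop where
  surjective : Function.Surjective π
  ker_eq : π.ker = fixedBlocks a ⊔ commonFixed a lam
  comp_eq : ∀ k, M k ∘ₗ π = π ∘ₗ convolution a lam k

namespace IsMiddleConvolution

variable {π : (Fin r → T) →ₗ[K] V} {M : Fin r → Module.End K V}

lemma apply_eq_zero_iff (h : IsMiddleConvolution a lam π M) (hlam : lam ≠ 1) {v : Fin r → T} :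
    π v = 0 ↔ ∃ t, lam • tailProd a 0 t = t ∧ v - tailProdVec a t ∈ fixedBlocks a := by
  rw [← LinearMap.mem_ker, h.ker_eq, commonFixed_eq_map_tailProdVec hlam, Submodule.mem_sup]
  constructor
  · rintro ⟨κ, hκ, _, ⟨t, ht, rfl⟩, rfl⟩
    exact ⟨t, sub_eq_zero.1 ht, by simpa using hκ⟩
  · rintro ⟨t, ht, hκ⟩
    exact ⟨_, hκ, _, ⟨t, sub_eq_zero.2 ht, rfl⟩, sub_add_cancel _ _⟩

theorem finrank_eq [FiniteDimensional K T] (h : IsMiddleConvolution a lam π M) (hr : 0 < r)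
    (hlam : lam ≠ 1) :
    finrank K V + ∑ k, finrank K (a k - 1).ker + finrank K (lam • tailProd a 0 - 1).ker
      = r * finrank K T := by
  have hsup := Submodule.finrank_sup_add_finrank_inf_eq (fixedBlocks a) (commonFixed a lam)
  rw [(disjoint_fixedBlocks_commonFixed hlam).eq_bot, finrank_bot, ← h.ker_eq, finrank_fixedBlocks,
    commonFixed_eq_map_tailProdVec hlam,
    (Submodule.equivMapOfInjective _ (tailProdVec_injective a hr) _).symm.finrank_eq] at hsup
  have hrank := π.finrank_range_add_finrank_ker
  rw [LinearMap.range_eq_top.2 h.surjective, finrank_top, Module.finrank_pi_fintype,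
    Finset.sum_const, Finset.card_univ, Fintype.card_fin, smul_eq_mul] at hrank
  omega

lemma ker_comp_single (h : IsMiddleConvolution a lam π M) (ha : NoTwistedInvariants a)
    (hlam₀ : lam ≠ 0) (hlam₁ : lam ≠ 1) (k : Fin r) :
    (π ∘ₗ LinearMap.single K (fun _ ↦ T) k).ker = (a k - 1).ker := by
  ext u
  simp only [LinearMap.mem_ker, LinearMap.comp_apply, LinearMap.coe_single, LinearMap.sub_apply,
    Module.End.one_apply, sub_eq_zero, h.apply_eq_zero_iff hlam₁, mem_fixedBlocks_iff]
  constructor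
  · rintro ⟨t, ht, hfix⟩
    have hne : ∀ j ≠ k, a j (tailProdVec a t j) = tailProdVec a t j := fun j hj ↦ by
      simpa [Pi.single_eq_of_ne hj] using hfix j
    obtain ⟨hk, hj⟩ := fixed_of_tailProdVec_fixed_of_ne hne ht
    simpa [ha.eq_zero hlam₀ hk hj] using hfix k
  · intro hu
    refine ⟨0, by simp, fun j ↦ ?_⟩
    rcases eq_or_ne j k with rfl | hj
    · simpa using hu
    · simp [Pi.single_eq_of_ne hj]

lemma sub_one_comp (h : IsMiddleConvolution a lam π M) (k : Fin r) :
    (M k - 1) ∘ₗ π = π ∘ₗ LinearMap.single K (fun _ ↦ T) k ∘ₗ convolutionRow a lam k := by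
  refine LinearMap.ext fun v ↦ ?_
  have hM : M k (π v) = π (convolution a lam k v) := LinearMap.congr_fun (h.comp_eq k) v
  simp [hM, convolution_apply]

lemma range_comp_single (h : IsMiddleConvolution a lam π M) (ha : NoTwistedCoinvariants a)
    (hlam : lam ≠ 0) (k : Fin r) :
    (π ∘ₗ LinearMap.single K (fun _ ↦ T) k).range = (M k - 1).range := by
  rw [← LinearMap.range_comp_of_range_eq_top (M k - 1) (LinearMap.range_eq_top.2 h.surjective),
    h.sub_one_comp, ← LinearMap.comp_assoc, LinearMap.range_comp_of_range_eq_top _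
      (LinearMap.range_eq_top.2 (convolutionRow_surjective ha hlam k))]

theorem centralizerDim_eq [FiniteDimensional K T] [FiniteDimensional K V]
    (h : IsMiddleConvolution a lam π M) (ha : NoTwistedInvariants a)
    (ha' : NoTwistedCoinvariants a) (hlam₀ : lam ≠ 0) (hlam₁ : lam ≠ 1) (k : Fin r) :
    (centralizerDim (M k) : ℤ) = centralizerDim (a k) + ((finrank K V : ℤ) - finrank K T) ^ 2
      + 2 * ((finrank K V : ℤ) - finrank K T) * finrank K (a k - 1).ker := by
  rw [← centralizerDim_smul_sub_one (M k) one_ne_zero,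
    ← centralizerDim_smul_sub_one (a k) one_ne_zero, one_smul, one_smul]
  refine centralizerDim_eq_of_intertwines (π ∘ₗ LinearMap.single K (fun _ ↦ T) k)
    (h.ker_comp_single ha hlam₀ hlam₁ k) (h.range_comp_single ha' hlam₀ k) (d := lam - 1) hlam₀ ?_
  rw [← LinearMap.comp_assoc, h.sub_one_comp]
  ext t
  simp only [LinearMap.comp_apply, LinearMap.coe_single, convolutionRow_single_self,
    LinearMap.add_apply, LinearMap.sub_apply, LinearMap.smul_apply, Module.End.one_apply]
  congr 2
  module

lemma ker_comp_tailProdVec (h : IsMiddleConvolution a lam π M) (ha : NoTwistedInvariants a)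
    (hr : 0 < r) (hlam : lam ≠ 1) :
    (π ∘ₗ tailProdVec a).ker = (lam • tailProd a 0 - 1).ker := by
  ext s
  simp only [LinearMap.mem_ker, LinearMap.comp_apply, LinearMap.sub_apply, LinearMap.smul_apply,
    Module.End.one_apply, sub_eq_zero, h.apply_eq_zero_iff hlam]
  constructor
  · rintro ⟨t, ht, hfix⟩
    rw [← map_sub] at hfix
    have hst : s - t = 0 :=
      ha.eq_zero_of_forall hr (apply_eq_self_of_tailProdVec_mem_fixedBlocks hfix)
    rwa [sub_eq_zero.1 hst]
  · exact fun hs ↦ ⟨s, hs, by simp⟩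

lemma prod_comp (h : IsMiddleConvolution a lam π M) :
    (List.ofFn M).prod ∘ₗ π = π ∘ₗ (List.ofFn (convolution a lam)).prod := by
  rw [List.ofFn_eq_map, List.ofFn_eq_map]
  induction List.finRange r with
  | nil => rfl
  | cons k l ih =>
    simp only [List.map_cons, List.prod_cons, Module.End.mul_eq_comp]
    rw [LinearMap.comp_assoc, ih, ← LinearMap.comp_assoc, h.comp_eq, LinearMap.comp_assoc]

lemma prod_sub_smul_one_comp (h : IsMiddleConvolution a lam π M) :
    ((List.ofFn M).prod - lam • 1) ∘ₗ π = π ∘ₗ tailProdVec a ∘ₗ (lam • tailSum a 0) := by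
  refine LinearMap.ext fun v ↦ ?_
  have hprod : (List.ofFn M).prod (π v) = π ((List.ofFn (convolution a lam)).prod v) :=
    LinearMap.congr_fun h.prod_comp v
  simp [hprod, convolution_prod_apply]

lemma range_comp_tailProdVec (h : IsMiddleConvolution a lam π M) (ha : NoTwistedCoinvariants a)
    (hr : 0 < r) (hlam : lam ≠ 0) :
    (π ∘ₗ tailProdVec a).range = ((List.ofFn M).prod - lam • 1).range := by
  have hsurj : (lam • tailSum a 0).range = ⊤ := by
    rw [LinearMap.range_smul _ _ hlam, LinearMap.range_eq_top.2 (tailSum_zero_surjective ha hr)]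
  rw [← LinearMap.range_comp_of_range_eq_top _ (LinearMap.range_eq_top.2 h.surjective),
    h.prod_sub_smul_one_comp, ← LinearMap.comp_assoc, LinearMap.range_comp_of_range_eq_top _ hsurj]

theorem centralizerDim_prod_eq [FiniteDimensional K T] [FiniteDimensional K V]
    (h : IsMiddleConvolution a lam π M) (ha : NoTwistedInvariants a)
    (ha' : NoTwistedCoinvariants a) (hr : 0 < r) (hlam₀ : lam ≠ 0) (hlam₁ : lam ≠ 1) :
    (centralizerDim (List.ofFn M).prod : ℤ) = centralizerDim (List.ofFn a).prod
      + ((finrank K V : ℤ) - finrank K T) ^ 2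
      + 2 * ((finrank K V : ℤ) - finrank K T) * finrank K (lam • tailProd a 0 - 1).ker := by
  rw [← centralizerDim_sub_smul_one (List.ofFn M).prod lam, ← tailProd_zero a,
    ← centralizerDim_smul_sub_one (tailProd a 0) hlam₀]
  refine centralizerDim_eq_of_intertwines (π ∘ₗ tailProdVec a) (h.ker_comp_tailProdVec ha hr hlam₁)
    (h.range_comp_tailProdVec ha' hr hlam₀) (d := 1 - lam) one_ne_zero ?_
  rw [← LinearMap.comp_assoc, h.prod_sub_smul_one_comp]
  ext1 t
  simp only [LinearMap.comp_apply, tailSum_tailProdVec a t (Nat.zero_le r), LinearMap.add_apply,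
    LinearMap.sub_apply, LinearMap.smul_apply, Module.End.one_apply]
  congr 2
  module

lemma isUnit [FiniteDimensional K V] (h : IsMiddleConvolution a lam π M) (hlam : lam ≠ 0)
    (ha : ∀ k, IsUnit (a k)) (k : Fin r) : IsUnit (M k) := by
  have hsurj : Function.Surjective (M k ∘ π) := by
    rw [← LinearMap.coe_comp, h.comp_eq]
    exact h.surjective.comp
      (convolution_surjective a lam ((Module.End.isUnit_iff _).1 (ha k)).2 hlam.isUnit)
  exact (LinearMap.isUnit_iff_range_eq_top _).2 (LinearMap.range_eq_top.2 hsurj.of_comp)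

end IsMiddleConvolution

/-- The index of rigidity of a tuple of automorphisms. The centralizer of `M_1 ⋯ M_r` stands for
that of `M_{r+1} = (M_1 ⋯ M_r)⁻¹`, with which it coincides. -/
def rigidityIndex (M : Fin r → Module.End K V) : ℤ :=
  ((r : ℤ) - 1) * (finrank K V : ℤ) ^ 2 + 2 - ∑ k, (centralizerDim (M k) : ℤ)
    - centralizerDim (List.ofFn M).prod

theorem middle_convolution_rigidity_index_general [FiniteDimensional K T]
    {π : (Fin r → T) →ₗ[K] V} {M : Fin r → Module.End K V} (h : IsMiddleConvolution a lam π M)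
    (hr : 0 < r) (hlam₀ : lam ≠ 0) (hlam₁ : lam ≠ 1) (ha : NoTwistedInvariants a)
    (ha' : NoTwistedCoinvariants a) : rigidityIndex a = rigidityIndex M := by
  have : FiniteDimensional K V := Module.Finite.of_surjective π h.surjective
  have hdim : (finrank K V : ℤ) + ∑ k, (finrank K (a k - 1).ker : ℤ)
      + finrank K (lam • tailProd a 0 - 1).ker = r * finrank K T := by
    exact_mod_cast h.finrank_eq hr hlam₁
  simp only [rigidityIndex, h.centralizerDim_eq ha ha' hlam₀ hlam₁,
    h.centralizerDim_prod_eq ha ha' hr hlam₀ hlam₁, Finset.sum_add_distrib, ← Finset.mul_sum,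
    Finset.sum_const, Finset.card_univ, Fintype.card_fin, nsmul_eq_mul]
  linear_combination 2 * ((finrank K V : ℤ) - finrank K T) * hdim

end MiddleConvolution

section Irreducible

variable {T : Type*} [AddCommGroup T] [Module ℂ T] {r : ℕ} {a : Fin r → Module.End ℂ T}

namespace IrredEndos

lemma twist (ha : IrredEndos a) (k : Fin r) {c : ℂ} (hc : c ≠ 0) :
    IrredEndos (twistTuple a k c) := by
  intro U hU
  obtain ⟨hk, hne⟩ := (forall_twistTuple_iff fun _ b ↦ ∀ v ∈ U, b v ∈ U).1 hU
  refine ha U fun j v hv ↦ ?_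
  rcases eq_or_ne j k with rfl | hj
  · exact (U.smul_mem_iff hc).1 (hk v hv)
  · exact hne j hj v hv

lemma iInf_ker_sub_one_eq_bot (ha : IrredEndos a) (hne : a ≠ 1) : ⨅ j, (a j - 1).ker = ⊥ := by
  have hfix {v : T} (hv : v ∈ ⨅ j, (a j - 1).ker) (j : Fin r) : a j v = v :=
    sub_eq_zero.1 (Submodule.mem_iInf _ |>.1 hv j)
  refine (ha _ fun j v hv ↦ ?_).resolve_right fun htop ↦ hne ?_
  · rwa [hfix hv j]
  · ext j v
    exact hfix (htop ▸ Submodule.mem_top) j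

lemma iSup_range_sub_one_eq_top (ha : IrredEndos a) (hne : a ≠ 1) :
    ⨆ j, (a j - 1).range = ⊤ := by
  have hmem (j : Fin r) (v : T) : a j v - v ∈ ⨆ j, (a j - 1).range :=
    Submodule.mem_iSup_of_mem j ⟨v, rfl⟩
  refine (ha _ fun j v hv ↦ ?_).resolve_left fun hbot ↦ hne ?_
  · simpa using add_mem (hmem j v) hv
  · ext j v
    simpa [hbot, sub_eq_zero] using hmem j v

lemma finrank_eq_one_of_one [Nontrivial T] (h : IrredEndos (1 : Fin r → Module.End ℂ T)) :
    finrank ℂ T = 1 := by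
  have : IsSimpleModule ℂ T := { eq_bot_or_eq_top U := h U fun _ _ hv ↦ hv }
  exact isSimpleModule_iff_finrank_eq_one.1 this

variable [Nontrivial T]

lemma twist_ne_one (ha : IrredEndos a)
    (h₁ : finrank ℂ T = 1 → ∃ i j, i ≠ j ∧ a i ≠ 1 ∧ a j ≠ 1) (k : Fin r) {c : ℂ} (hc : c ≠ 0) :
    twistTuple a k c ≠ 1 := by
  intro hone
  have hne : ∀ j ≠ k, a j = 1 :=
    ((forall_twistTuple_iff fun _ b ↦ b = 1).1 (congrFun hone)).2
  obtain ⟨i, j, hij, hi, hj⟩ := h₁ (finrank_eq_one_of_one (hone ▸ ha.twist k hc))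
  rcases eq_or_ne i k with rfl | hik
  · exact hj (hne j hij.symm)
  · exact hi (hne i hik)

theorem noTwistedInvariants (ha : IrredEndos a)
    (h₁ : finrank ℂ T = 1 → ∃ i j, i ≠ j ∧ a i ≠ 1 ∧ a j ≠ 1) : NoTwistedInvariants a :=
  fun k _ hc ↦ (ha.twist k hc).iInf_ker_sub_one_eq_bot (ha.twist_ne_one h₁ k hc)

theorem noTwistedCoinvariants (ha : IrredEndos a)
    (h₁ : finrank ℂ T = 1 → ∃ i j, i ≠ j ∧ a i ≠ 1 ∧ a j ≠ 1) : NoTwistedCoinvariants a :=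
  fun k _ hc ↦ (ha.twist k hc).iSup_range_sub_one_eq_top (ha.twist_ne_one h₁ k hc)

end IrredEndos

end Irreducible

lemma mulVecLin_eq_one_iff {R m : Type*} [CommSemiring R] [Fintype m] [DecidableEq m]
    {A : Matrix m m R} : (A.mulVecLin : Module.End R (m → R)) = 1 ↔ A = 1 :=
  map_eq_one_iff (Matrix.toLinAlgEquiv' (R := R) (n := m)) (AlgEquiv.injective _)

section Complex

variable {W : Type*} [AddCommGroup W] [Module ℂ W] {n r : ℕ}

lemma finrank_centEnd (f : Module.End ℂ W) : finrank ℂ (centEnd f) = centralizerDim f := by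
  have h : centEnd f = Subalgebra.toSubmodule (Subalgebra.centralizer ℂ {f}) := by
    ext X
    simp only [Subalgebra.mem_toSubmodule, Subalgebra.mem_centralizer_iff, Set.mem_singleton_iff,
      forall_eq]
    exact eq_comm
  rw [h]
  rfl

lemma centEnd_inverse {f : Module.End ℂ W} (hf : IsUnit f) :
    centEnd (Ring.inverse f) = centEnd f := by
  obtain ⟨u, rfl⟩ := hf
  ext X
  rw [Ring.inverse_unit]
  exact Commute.units_inv_right_iff

lemma rigIdx_eq_rigidityIndex {M : Fin r → Module.End ℂ W} (hM : ∀ k, IsUnit (M k)) :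
    rigIdx M = rigidityIndex M := by
  have hprod : IsUnit (List.ofFn M).prod := List.prod_isUnit fun b hb ↦ by
    obtain ⟨k, rfl⟩ := List.mem_ofFn.1 hb
    exact hM k
  rw [rigIdx, rigidityIndex, centEnd_inverse hprod]
  simp only [finrank_centEnd]

variable (A : Fin r → Matrix (Fin n) (Fin n) ℂ) (lam : ℂ)

lemma Bmat_mulVecLin_comp_curry_symm (k : Fin r) :
    (Bmat A lam k).mulVecLin ∘ₗ (LinearEquiv.curry ℂ ℂ (Fin r) (Fin n)).symm.toLinearMap =
      (LinearEquiv.curry ℂ ℂ (Fin r) (Fin n)).symm.toLinearMap ∘ₗ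
        convolution (fun j ↦ (A j).mulVecLin) lam k := by
  ext j x ⟨i, y⟩
  have hcol : ((Bmat A lam k).mulVecLin ∘ₗ (LinearEquiv.curry ℂ ℂ _ _).symm.toLinearMap)
      (Pi.single j (Pi.single x 1)) (i, y) = Bmat A lam k (i, y) (j, x) := by
    simp [Pi.uncurry_single_single]
  have hone : (Pi.single x 1 : Fin n → ℂ) y = (1 : Matrix (Fin n) (Fin n) ℂ) y x := by
    simp [Matrix.one_apply, Pi.single_apply]
  refine hcol.trans ?_
  change _ = (Pi.single j (Pi.single x 1) : Fin r → Fin n → ℂ) i y + (Pi.single k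
    (convolutionRow (fun j ↦ (A j).mulVecLin) lam k (Pi.single j (Pi.single x 1))) :
      Fin r → Fin n → ℂ) i y
  rcases eq_or_ne i k with rfl | hik
  · rw [Pi.single_eq_same]
    rcases lt_trichotomy j i with hji | rfl | hji
    · simp [Bmat, hji, hji.ne', convolutionRow_single_of_lt, hone]
    · simp [Bmat, convolutionRow_single_self]
    · rw [convolutionRow_single_of_gt _ _ hji]
      simp [Bmat, hji.ne, hji.ne', hji.not_gt, hone]
  · rw [Pi.single_eq_of_ne hik]
    rcases eq_or_ne i j with rfl | hij
    · simp [Bmat, hik, Matrix.one_apply, Pi.single_apply]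
    · simp [Bmat, hik, hij]

lemma comap_curry_symm_Ksub :
    (Ksub A).comap (LinearEquiv.curry ℂ ℂ (Fin r) (Fin n)).symm.toLinearMap
      = fixedBlocks fun k ↦ (A k).mulVecLin := by
  ext v
  simp only [Ksub, Submodule.comap_iInf, Submodule.mem_iInf, mem_fixedBlocks_iff]
  refine forall_congr' fun k ↦ ?_
  have hv : (A k - 1).mulVecLin (v k) = (A k).mulVecLin (v k) - v k := by
    simp
  rw [← sub_eq_zero, ← hv]
  rfl

lemma comap_curry_symm_Lsub :
    (Lsub A lam).comap (LinearEquiv.curry ℂ ℂ (Fin r) (Fin n)).symm.toLinearMap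
      = commonFixed (fun k ↦ (A k).mulVecLin) lam := by
  simp only [Lsub, commonFixed, Submodule.comap_iInf]
  refine iInf_congr fun k ↦ ?_
  rw [← LinearMap.ker_comp, LinearMap.sub_comp, Bmat_mulVecLin_comp_curry_symm, LinearMap.id_comp]
  ext v
  simp [sub_eq_zero, Function.uncurry_injective.eq_iff]

lemma isMiddleConvolution_MCspace {M : Fin r → Module.End ℂ (MCspace A lam)}
    (hM : ∀ k, (M k).comp (Ksub A ⊔ Lsub A lam).mkQ
        = ((Ksub A ⊔ Lsub A lam).mkQ).comp (Bmat A lam k).mulVecLin) :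
    IsMiddleConvolution (fun k ↦ (A k).mulVecLin) lam
      ((Ksub A ⊔ Lsub A lam).mkQ ∘ₗ (LinearEquiv.curry ℂ ℂ (Fin r) (Fin n)).symm.toLinearMap)
      M where
  surjective := (Submodule.mkQ_surjective _).comp (LinearEquiv.surjective _)
  ker_eq := by
    rw [LinearMap.ker_comp, Submodule.ker_mkQ, ← comap_curry_symm_Ksub, ← comap_curry_symm_Lsub]
    simp only [Submodule.comap_equiv_eq_map_symm, Submodule.map_sup]
  comp_eq k := by
    rw [← LinearMap.comp_assoc, hM, LinearMap.comp_assoc, Bmat_mulVecLin_comp_curry_symm,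
      LinearMap.comp_assoc]

end Complex

/-- **The middle convolution preserves the index of rigidity.** Let `A = (A_1, …, A_r)`
be an irreducible tuple in `GL_n(ℂ)` (with at least two members different from the
identity if `n = 1`) and `λ ∉ {0, 1}`. Then `i(A) = i(MC_λ(A))`. -/
theorem middle_convolution_rigidity_index (n r : ℕ) (hn : 1 ≤ n) (hr : 1 ≤ r)
    (A : Fin r → Matrix (Fin n) (Fin n) ℂ)
    (hUnit : ∀ k, IsUnit (A k))
    (hIrr : IrredEndos fun k => (A k).mulVecLin)
    (hn1 : n = 1 → ∃ i j : Fin r, i ≠ j ∧ A i ≠ 1 ∧ A j ≠ 1)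
    (lam : ℂ) (hl0 : lam ≠ 0) (hl1 : lam ≠ 1)
    (M : Fin r → Module.End ℂ (MCspace A lam))
    (hM : ∀ k, (M k).comp (Ksub A ⊔ Lsub A lam).mkQ
        = ((Ksub A ⊔ Lsub A lam).mkQ).comp (Bmat A lam k).mulVecLin) :
    rigIdx (fun k => ((A k).mulVecLin : Module.End ℂ (Fin n → ℂ))) = rigIdx M := by
  have : Nonempty (Fin n) := Fin.pos_iff_nonempty.1 hn
  have hMC := isMiddleConvolution_MCspace A lam hM
  have hunit (k : Fin r) : IsUnit ((A k).mulVecLin : Module.End ℂ (Fin n → ℂ)) :=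
    (hUnit k).map (Matrix.toLinAlgEquiv' (R := ℂ) (n := Fin n))
  have h₁ (hfin : finrank ℂ (Fin n → ℂ) = 1) : ∃ i j : Fin r, i ≠ j ∧
      ((A i).mulVecLin : Module.End ℂ _) ≠ 1 ∧ ((A j).mulVecLin : Module.End ℂ _) ≠ 1 := by
    simpa [mulVecLin_eq_one_iff] using hn1 (by simpa using hfin)
  rw [rigIdx_eq_rigidityIndex hunit, rigIdx_eq_rigidityIndex (hMC.isUnit hl0 hunit)]
  exact middle_convolution_rigidity_index_general hMC hr hl0 hl1 (hIrr.noTwistedInvariants h₁)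
    (hIrr.noTwistedCoinvariants h₁)

end
end

section
/- MC_{−1} turns symplectic tuples into orthogonal ones and orthogonal into symplectic: Let n ≥ 1, r ≥ 1 and let A = (A_1, …, A_r) ∈ GL_n(ℂ)^r be an irreducible tuple such that, in case n = 1, at least two of the A_i differ from the identity. Suppose there is a nondegenerate bilinear form b on ℂⁿ which is alternating (respectively symmetric) and satisfies b(A_i v, A_i w) = b(v, w) for all v, w ∈ ℂⁿ and all 1 ≤ i ≤ r. Then there exists a nondegenerate bilinear form b' on the quotient V = (ℂⁿ)^r/(K+L) which is symmetric (respectively alternating) and is invariant under every element of the tuple MC_{−1}(A). -/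
open Matrix

noncomputable section

/-!
Write `φ_k v` for the `k`-th block of `B_k v - v`; the other blocks of `B_k v - v` vanish. On `K`
one has `φ_k v = (λ - 1) v_k`, so for `λ ≠ 1` a vector `v` lies in `K + L` iff every `φ_k v` is
fixed by `A_k`. For `λ = -1` and an invariant form `b` put
`β(v, w) = ∑ k, b (φ_k v) ((A_k - 1) w_k)`. Invariance of `b` gives the second expression
`β(v, w) = -∑ k, b ((A_k - 1) v_k) (φ_k w)`. The first expression shows that the left radical of `β`
is `K + L`, the two together show that `β` is invariant under every `B_k`, and comparing them shows
that passing from `b` to `β` changes the sign of the symmetry. The form `b'` is `β` on the quotient.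
-/

section Convolution

variable {R ι W : Type*} [CommRing R] [AddCommGroup W] [Module R W]

/-- The subspace `K` of the convolution: the direct sum of the fixed spaces of the `g_k`. -/
def convFixedBlocks (g : ι → Module.End R W) : Submodule R (ι → W) :=
  Submodule.pi Set.univ fun k => LinearMap.ker (g k - 1)

variable {g : ι → Module.End R W} {lam : R} {v : ι → W}

theorem mem_convFixedBlocks : v ∈ convFixedBlocks g ↔ ∀ k, g k (v k) = v k := by
  simp [convFixedBlocks, sub_eq_zero]

variable [Fintype ι] [LinearOrder ι]

/-- The `k`-th block `∑_{j < k} λ (g_j - 1) v_j + (λ g_k - 1) v_k + ∑_{j > k} (g_j - 1) v_j` of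
`B_k v - v`. The middle term is split as `(g_k - 1) v_k + (λ - 1) g_k v_k`. -/
def convIncrement (g : ι → Module.End R W) (lam : R) (k : ι) : (ι → W) →ₗ[R] W :=
  ∑ j, (if j < k then lam else 1) • (g j - 1) ∘ₗ LinearMap.proj j +
    (lam - 1) • g k ∘ₗ LinearMap.proj k

/-- The operator `B_k` of the convolution of a tuple `g` of endomorphisms of `W`, acting on the
direct sum `ι → W`. -/
def convMap (g : ι → Module.End R W) (lam : R) (k : ι) : Module.End R (ι → W) :=
  1 + LinearMap.single R (fun _ => W) k ∘ₗ convIncrement g lam k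

/-- The subspace `L` of the convolution: the common fixed space of the operators `B_k`. -/
def convFixed (g : ι → Module.End R W) (lam : R) : Submodule R (ι → W) :=
  ⨅ k, LinearMap.ker (convMap g lam k - 1)

theorem convIncrement_apply (g : ι → Module.End R W) (lam : R) (k : ι) (v : ι → W) :
    convIncrement g lam k v =
      ∑ j, (if j < k then lam else 1) • (g j (v j) - v j) + (lam - 1) • g k (v k) := by
  simp only [convIncrement, LinearMap.add_apply, LinearMap.sum_apply, LinearMap.smul_apply,
    LinearMap.comp_apply, LinearMap.proj_apply, LinearMap.sub_apply, Module.End.one_apply]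

theorem convMap_apply (g : ι → Module.End R W) (lam : R) (k : ι) (v : ι → W) :
    convMap g lam k v = v + Pi.single k (convIncrement g lam k v) :=
  rfl

theorem convIncrement_single (g : ι → Module.End R W) (lam : R) (k : ι) (y : W) :
    convIncrement g lam k (Pi.single k y) = lam • g k y - y := by
  rw [convIncrement_apply, Finset.sum_eq_single k (fun j _ hj => by simp [hj]) (by simp)]
  simp only [lt_irrefl, if_false, Pi.single_eq_same]
  module

theorem mem_convFixed : v ∈ convFixed g lam ↔ ∀ k, convIncrement g lam k v = 0 := by
  simp [convFixed, convMap_apply]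

theorem convIncrement_of_mem_convFixedBlocks (hv : v ∈ convFixedBlocks g) (k : ι) :
    convIncrement g lam k v = (lam - 1) • v k := by
  simp [convIncrement_apply, mem_convFixedBlocks.1 hv]

theorem map_convIncrement_of_mem_sup (hv : v ∈ convFixedBlocks g ⊔ convFixed g lam) (k : ι) :
    g k (convIncrement g lam k v) = convIncrement g lam k v := by
  obtain ⟨x, hx, y, hy, rfl⟩ := Submodule.mem_sup.1 hv
  rw [map_add, convIncrement_of_mem_convFixedBlocks hx, mem_convFixed.1 hy k, add_zero, map_smul,
    mem_convFixedBlocks.1 hx k]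

theorem mem_convFixedBlocks_sup_convFixed (hlam : IsUnit (lam - 1)) :
    v ∈ convFixedBlocks g ⊔ convFixed g lam ↔
      ∀ k, g k (convIncrement g lam k v) = convIncrement g lam k v := by
  refine ⟨map_convIncrement_of_mem_sup, fun hfix => ?_⟩
  obtain ⟨c, hc⟩ := hlam.exists_left_inv
  let x : ι → W := fun k => c • convIncrement g lam k v
  have hx : x ∈ convFixedBlocks g :=
    mem_convFixedBlocks.2 fun k => by simp only [x, map_smul, hfix]
  have hy : v - x ∈ convFixed g lam := mem_convFixed.2 fun k => by
    rw [map_sub, convIncrement_of_mem_convFixedBlocks hx, smul_smul, mul_comm, hc, one_smul,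
      sub_self]
  exact Submodule.mem_sup.2 ⟨x, hx, v - x, hy, add_sub_cancel x v⟩

end Convolution

section Forms

variable {R W : Type*} [CommRing R] [AddCommGroup W] [Module R W] {b : LinearMap.BilinForm R W}

theorem forall_apply_map_sub_self_eq_zero_iff {T : Module.End R W} (hT : Function.Surjective T)
    (hbT : ∀ x y, b (T x) (T y) = b x y) (hb : b.SeparatingLeft) {x : W} :
    (∀ y, b x (T y - y) = 0) ↔ T x = x := by
  have h_adj (y : W) : b x (T y - y) = b (x - T x) (T y) := by
    simp only [map_sub, LinearMap.sub_apply, hbT]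
  simp only [h_adj]
  refine ⟨fun h => ?_, fun h y => by rw [h, sub_self, map_zero, LinearMap.zero_apply]⟩
  exact (sub_eq_zero.1 (hb _ (hT.forall.2 h))).symm

theorem exists_bilinForm_of_surjective {E Q : Type*} [AddCommGroup E] [Module R E]
    [AddCommGroup Q] [Module R Q] {p : E →ₗ[R] Q} (hp : Function.Surjective p)
    {β : LinearMap.BilinForm R E} (hl : LinearMap.ker p ≤ LinearMap.ker β)
    (hr : LinearMap.ker p ≤ LinearMap.ker β.flip) :
    ∃ b' : LinearMap.BilinForm R Q, ∀ v w, b' (p v) (p w) = β v w := by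
  let e := (p.quotKerEquivOfSurjective hp).symm
  refine ⟨(β.liftQ₂ _ _ hl hr).compl₁₂ e.toLinearMap e.toLinearMap, fun v w => ?_⟩
  simp only [LinearMap.compl₁₂_apply, LinearEquiv.coe_coe, e,
    LinearMap.quotKerEquivOfSurjective_symm_apply]
  exact LinearMap.liftQ₂_mk _ _ v w

end Forms

section ConvolutionForm

variable {R ι W : Type*} [CommRing R] [Fintype ι] [LinearOrder ι] [AddCommGroup W] [Module R W]

/-- The form `β` on `ι → W` induced by a form `b` on `W`; for invariant `b` it descends to the
middle convolution with parameter `-1`. -/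
def convForm (b : LinearMap.BilinForm R W) (g : ι → Module.End R W) :
    LinearMap.BilinForm R (ι → W) :=
  ∑ k, b.compl₁₂ (convIncrement g (-1) k) ((g k - 1) ∘ₗ LinearMap.proj k)

variable {b : LinearMap.BilinForm R W} {g : ι → Module.End R W}

theorem convForm_apply (b : LinearMap.BilinForm R W) (g : ι → Module.End R W) (v w : ι → W) :
    convForm b g v w = ∑ k, b (convIncrement g (-1) k v) (g k (w k) - w k) := by
  simp [convForm, LinearMap.sum_apply]

theorem convForm_single_right (b : LinearMap.BilinForm R W) (g : ι → Module.End R W) (v : ι → W)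
    (k : ι) (y : W) :
    convForm b g v (Pi.single k y) = b (convIncrement g (-1) k v) (g k y - y) := by
  rw [convForm_apply, Finset.sum_eq_single k (fun j _ hj => by simp [hj]) (by simp),
    Pi.single_eq_same]

theorem convForm_eq_neg_sum (hgb : ∀ k x y, b (g k x) (g k y) = b x y) (v w : ι → W) :
    convForm b g v w = -∑ k, b (g k (v k) - v k) (convIncrement g (-1) k w) := by
  let d (v : ι → W) (k : ι) : W := g k (v k) - v k
  have expand_left : convForm b g v w =
      (∑ k, ∑ j, (if j < k then -1 else 1) * b (d v j) (d w k)) +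
        ∑ k, (-1 - 1) * b (g k (v k)) (d w k) := by
    simp only [convForm_apply, convIncrement_apply, map_add, map_sum, map_smul,
      LinearMap.add_apply, LinearMap.sum_apply, LinearMap.smul_apply, smul_eq_mul,
      Finset.sum_add_distrib, d]
  have expand_right : ∑ k, b (d v k) (convIncrement g (-1) k w) =
      (∑ k, ∑ j, (if k < j then -1 else 1) * b (d v j) (d w k)) +
        ∑ k, (-1 - 1) * b (d v k) (g k (w k)) := by
    simp only [convIncrement_apply, map_add, map_sum, map_smul, smul_eq_mul,
      Finset.sum_add_distrib, d]
    rw [Finset.sum_comm]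
  have weights (j k : ι) :
      (if j < k then -1 else 1) + (if k < j then -1 else 1) = if j = k then (2 : R) else 0 := by
    rcases lt_trichotomy j k with h | rfl | h
    · simp [h, h.not_gt, h.ne]
    · norm_num
    · simp [h, h.not_gt, h.ne']
  have diagonal (k : ι) : 2 * b (d v k) (d w k) + (-1 - 1) * b (g k (v k)) (d w k) +
      (-1 - 1) * b (d v k) (g k (w k)) = 0 := by
    simp only [d, map_sub, LinearMap.sub_apply, hgb]
    ring
  have sum_weights (k : ι) : (∑ j, (if j < k then -1 else 1) * b (d v j) (d w k)) +
      ∑ j, (if k < j then -1 else 1) * b (d v j) (d w k) = 2 * b (d v k) (d w k) := by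
    simp only [← Finset.sum_add_distrib, ← add_mul, weights]
    simp
  rw [eq_neg_iff_add_eq_zero, expand_left, expand_right, add_add_add_comm]
  simp only [← Finset.sum_add_distrib, sum_weights, ← add_assoc, diagonal,
    Finset.sum_const_zero]

theorem convForm_single_left (hgb : ∀ k x y, b (g k x) (g k y) = b x y) (k : ι) (y : W)
    (w : ι → W) :
    convForm b g (Pi.single k y) w = -b (g k y - y) (convIncrement g (-1) k w) := by
  rw [convForm_eq_neg_sum hgb, Finset.sum_eq_single k (fun j _ hj => by simp [hj]) (by simp),
    Pi.single_eq_same]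

theorem convForm_convMap (hgb : ∀ k x y, b (g k x) (g k y) = b x y) (k : ι) (v w : ι → W) :
    convForm b g (convMap g (-1) k v) (convMap g (-1) k w) = convForm b g v w := by
  simp only [convMap_apply, map_add, LinearMap.add_apply, convForm_single_right,
    convForm_single_left hgb, convIncrement_single, map_sub, map_smul, LinearMap.sub_apply,
    smul_eq_mul, hgb]
  ring

theorem ker_convForm (h2 : IsUnit (2 : R)) (hg : ∀ k, Function.Surjective (g k))
    (hb : b.SeparatingLeft) (hgb : ∀ k x y, b (g k x) (g k y) = b x y) :
    LinearMap.ker (convForm b g) = convFixedBlocks g ⊔ convFixed g (-1) := by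
  ext v
  have hlam : IsUnit (-1 - 1 : R) := by convert h2.neg using 1; norm_num
  rw [LinearMap.mem_ker, mem_convFixedBlocks_sup_convFixed hlam]
  simp_rw [← forall_apply_map_sub_self_eq_zero_iff (hg _) (hgb _) hb]
  constructor
  · intro hv k y
    rw [← convForm_single_right, hv, LinearMap.zero_apply]
  · intro hv
    refine LinearMap.ext fun w => ?_
    simp only [convForm_apply, hv, Finset.sum_const_zero, LinearMap.zero_apply]

theorem sup_le_ker_flip_convForm (hgb : ∀ k x y, b (g k x) (g k y) = b x y) :
    convFixedBlocks g ⊔ convFixed g (-1) ≤ LinearMap.ker (convForm b g).flip := by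
  intro w hw
  refine LinearMap.ext fun v => ?_
  have h_orth (k : ι) : b (g k (v k) - v k) (convIncrement g (-1) k w) = 0 := by
    rw [map_sub, LinearMap.sub_apply, sub_eq_zero, ← hgb k (v k),
      map_convIncrement_of_mem_sup hw]
  rw [LinearMap.BilinForm.flip_apply, convForm_eq_neg_sum hgb]
  simp only [h_orth, Finset.sum_const_zero, neg_zero, LinearMap.zero_apply]

theorem convForm_swap {ε : R} (hgb : ∀ k x y, b (g k x) (g k y) = b x y)
    (hε : ∀ x y, b x y = ε * b y x) (v w : ι → W) :
    convForm b g v w = -ε * convForm b g w v := by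
  simp only [convForm_eq_neg_sum hgb v w, convForm_apply b g w v, hε (g _ (v _) - v _),
    ← Finset.mul_sum, neg_mul]

theorem convForm_isSymm_of_isAlt (hgb : ∀ k x y, b (g k x) (g k y) = b x y) (hb : b.IsAlt) :
    (convForm b g).IsSymm :=
  ⟨fun v w => by
    simpa using convForm_swap hgb (ε := -1) (fun x y => by rw [← hb.neg_eq y x, neg_one_mul]) v w⟩

theorem convForm_isAlt_of_isSymm (h2 : IsUnit (2 : R))
    (hgb : ∀ k x y, b (g k x) (g k y) = b x y) (hb : b.IsSymm) : (convForm b g).IsAlt := by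
  intro v
  have h_skew := convForm_swap hgb (ε := 1) (fun x y => by simpa using hb.eq x y) v v
  exact h2.mul_right_eq_zero.1 (by linear_combination h_skew)

end ConvolutionForm

section MiddleConvolution

variable {R ι W Q : Type*} [CommRing R] [Fintype ι] [LinearOrder ι] [AddCommGroup W] [Module R W]
  [AddCommGroup Q] [Module R Q] {b : LinearMap.BilinForm R W} {g : ι → Module.End R W}
  {p : (ι → W) →ₗ[R] Q} {M : ι → Module.End R Q}

theorem exists_invariant_form_middle_convolution (h2 : IsUnit (2 : R))
    (hg : ∀ k, Function.Surjective (g k)) (hb : b.SeparatingLeft)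
    (hgb : ∀ k x y, b (g k x) (g k y) = b x y) (hp : Function.Surjective p)
    (hker : LinearMap.ker p = convFixedBlocks g ⊔ convFixed g (-1))
    (hM : ∀ k, M k ∘ₗ p = p ∘ₗ convMap g (-1) k) :
    ∃ b' : LinearMap.BilinForm R Q, b'.SeparatingLeft ∧
      (∀ k x y, b' (M k x) (M k y) = b' x y) ∧ ∀ v w, b' (p v) (p w) = convForm b g v w := by
  have hker_form : LinearMap.ker p = LinearMap.ker (convForm b g) :=
    hker.trans (ker_convForm h2 hg hb hgb).symm
  obtain ⟨b', hb'⟩ := exists_bilinForm_of_surjective hp hker_form.le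
    (hker.le.trans (sup_le_ker_flip_convForm hgb))
  refine ⟨b', hp.forall.2 fun v hv => ?_, fun k => hp.forall₂.2 fun v w => ?_, hb'⟩
  · rw [← LinearMap.mem_ker, hker_form, LinearMap.mem_ker]
    refine LinearMap.ext fun w => ?_
    rw [← hb', hv, LinearMap.zero_apply]
  · have hMp (u : ι → W) : M k (p u) = p (convMap g (-1) k u) := LinearMap.congr_fun (hM k) u
    rw [hMp, hMp, hb', hb', convForm_convMap hgb]

/-- The middle convolution is presented by a surjection `p` from `ι → W` with kernel `K + L`
intertwining the `B_k` with the `M_k`, so that any model of the quotient is covered. -/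
theorem middle_convolution_neg_one_duality_general (h2 : IsUnit (2 : R))
    (hg : ∀ k, Function.Surjective (g k)) (hb : b.SeparatingLeft)
    (hgb : ∀ k x y, b (g k x) (g k y) = b x y) (hp : Function.Surjective p)
    (hker : LinearMap.ker p = convFixedBlocks g ⊔ convFixed g (-1))
    (hM : ∀ k, M k ∘ₗ p = p ∘ₗ convMap g (-1) k) :
    (b.IsAlt → ∃ b' : LinearMap.BilinForm R Q, b'.SeparatingLeft ∧ (∀ x y, b' x y = b' y x) ∧
      ∀ k x y, b' (M k x) (M k y) = b' x y) ∧
    ((∀ x y, b x y = b y x) → ∃ b' : LinearMap.BilinForm R Q, b'.SeparatingLeft ∧ b'.IsAlt ∧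
      ∀ k x y, b' (M k x) (M k y) = b' x y) := by
  obtain ⟨b', hsep, hinv, hb'⟩ :=
    exists_invariant_form_middle_convolution h2 hg hb hgb hp hker hM
  refine ⟨fun halt => ⟨b', hsep, hp.forall₂.2 fun v w => ?_, hinv⟩,
    fun hsymm => ⟨b', hsep, hp.forall.2 fun v => ?_, hinv⟩⟩
  · rw [hb', hb', ← (convForm_isSymm_of_isAlt hgb halt).eq]
  · rw [hb', convForm_isAlt_of_isSymm h2 hgb ⟨hsymm⟩]

end MiddleConvolution

section BlockMatrices

variable {n r : ℕ} (A : Fin r → Matrix (Fin n) (Fin n) ℂ) (lam : ℂ)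

theorem Bmat_apply_same_block (k j : Fin r) (a c : Fin n) :
    Bmat A lam k (k, a) (j, c) =
      ((if j < k then lam else 1) • (A j - 1) + if j = k then (lam - 1) • A k + 1 else 0) a c := by
  rcases lt_trichotomy j k with h | rfl | h
  · simp [Bmat, h, h.ne]
  · simp only [Bmat, Matrix.of_apply, lt_irrefl, if_true, if_false, Matrix.add_apply,
      Matrix.smul_apply, Matrix.sub_apply, smul_eq_mul]
    ring
  · simp [Bmat, h.not_gt, h.ne']

theorem Bmat_mulVec_same_block (k : Fin r) (v : Fin r × Fin n → ℂ) (a : Fin n) :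
    (Bmat A lam k *ᵥ v) (k, a) =
      v (k, a) + convIncrement (fun j => (A j).mulVecLin) lam k (Function.curry v) a := by
  let u : Fin r → Fin n → ℂ := Function.curry v
  calc (Bmat A lam k *ᵥ v) (k, a)
    _ = ∑ j, (((if j < k then lam else 1) • (A j - 1) +
          if j = k then (lam - 1) • A k + 1 else 0) *ᵥ u j) a := by
      rw [Matrix.mulVec, dotProduct, Fintype.sum_prod_type]
      simp only [Bmat_apply_same_block]
      rfl
    _ = u k a + convIncrement (fun j => (A j).mulVecLin) lam k u a := by
      have h_diag : ∑ j, ((if j = k then (lam - 1) • A k + 1 else 0) *ᵥ u j) a =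
          (((lam - 1) • A k + 1) *ᵥ u k) a := by
        rw [Finset.sum_eq_single k] <;> simp +contextual
      simp only [Matrix.add_mulVec, Matrix.smul_mulVec, Matrix.sub_mulVec, Matrix.one_mulVec,
        convIncrement_apply, Matrix.mulVecLin_apply, Pi.add_apply, Finset.sum_apply,
        Finset.sum_add_distrib, h_diag]
      ring

theorem Bmat_mulVec_other_block {i k : Fin r} (hik : i ≠ k) (v : Fin r × Fin n → ℂ)
    (a : Fin n) : (Bmat A lam k *ᵥ v) (i, a) = v (i, a) := by
  have h_row : (Bmat A lam k *ᵥ v) (i, a) = (1 *ᵥ v) (i, a) := by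
    simp only [Matrix.mulVec, dotProduct, Bmat, Matrix.of_apply, if_neg hik]
  rw [h_row, Matrix.one_mulVec]

theorem curry_Bmat_mulVec (k : Fin r) (v : Fin r × Fin n → ℂ) :
    Function.curry (Bmat A lam k *ᵥ v) =
      convMap (fun j => (A j).mulVecLin) lam k (Function.curry v) := by
  ext i a
  rcases eq_or_ne i k with rfl | hik
  · simp [convMap_apply, Bmat_mulVec_same_block]
  · simp [convMap_apply, Bmat_mulVec_other_block A lam hik, hik]

theorem Bmat_mulVecLin_comp_uncurry (k : Fin r) :
    (Bmat A lam k).mulVecLin ∘ₗ (LinearEquiv.curry ℂ ℂ (Fin r) (Fin n)).symm.toLinearMap =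
      (LinearEquiv.curry ℂ ℂ (Fin r) (Fin n)).symm.toLinearMap ∘ₗ
        convMap (fun j => (A j).mulVecLin) lam k :=
  LinearMap.ext fun u => Function.curry_injective (curry_Bmat_mulVec A lam k (Function.uncurry u))

theorem Ksub_eq_comap_curry :
    Ksub A = (convFixedBlocks fun k => (A k).mulVecLin).comap
      (LinearEquiv.curry ℂ ℂ (Fin r) (Fin n)).toLinearMap := by
  ext v
  simp only [Ksub, Submodule.mem_iInf, LinearMap.mem_ker, LinearMap.comp_apply,
    Matrix.mulVecLin_apply, Matrix.sub_mulVec, Matrix.one_mulVec, sub_eq_zero,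
    Submodule.mem_comap, mem_convFixedBlocks]
  rfl

theorem Lsub_eq_comap_curry :
    Lsub A lam = (convFixed (fun k => (A k).mulVecLin) lam).comap
      (LinearEquiv.curry ℂ ℂ (Fin r) (Fin n)).toLinearMap := by
  ext v
  simp [Lsub, convFixed, sub_eq_zero, ← curry_Bmat_mulVec, Function.curry_injective.eq_iff]

theorem ker_mkQ_comp_uncurry :
    LinearMap.ker ((Ksub A ⊔ Lsub A lam).mkQ ∘ₗ (LinearEquiv.curry ℂ ℂ (Fin r) (Fin n)).symm) =
      convFixedBlocks (fun k => (A k).mulVecLin) ⊔ convFixed (fun k => (A k).mulVecLin) lam := by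
  have hcurry := (LinearEquiv.curry ℂ ℂ (Fin r) (Fin n)).surjective
  rw [LinearMap.ker_comp, Submodule.ker_mkQ, ← Submodule.map_equiv_eq_comap_symm,
    Submodule.map_sup, Ksub_eq_comap_curry, Lsub_eq_comap_curry,
    Submodule.map_comap_eq_of_surjective hcurry, Submodule.map_comap_eq_of_surjective hcurry]

end BlockMatrices

/-- **`MC_{−1}` turns symplectic tuples into orthogonal ones and orthogonal tuples into
symplectic ones.** Let `A = (A_1, …, A_r)` be an irreducible tuple in `GL_n(ℂ)` (with at
least two members different from the identity if `n = 1`), and let `b` be a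
nondegenerate bilinear form on `ℂⁿ` invariant under every `A_i`. If `b` is alternating,
then `V = (ℂⁿ)^r/(K + L)` carries a nondegenerate symmetric bilinear form invariant
under every member of `MC_{−1}(A)`; if `b` is symmetric, then `V` carries a
nondegenerate alternating such form. -/
theorem middle_convolution_neg_one_duality (n r : ℕ) (hn : 1 ≤ n) (hr : 1 ≤ r)
    (A : Fin r → Matrix (Fin n) (Fin n) ℂ)
    (hUnit : ∀ k, IsUnit (A k))
    (hIrr : IrredEndos fun k => (A k).mulVecLin)
    (hn1 : n = 1 → ∃ i j : Fin r, i ≠ j ∧ A i ≠ 1 ∧ A j ≠ 1)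
    (b : (Fin n → ℂ) →ₗ[ℂ] (Fin n → ℂ) →ₗ[ℂ] ℂ)
    (hbnd : ∀ v, (∀ w, b v w = 0) → v = 0)
    (hbinv : ∀ k, ∀ v w, b ((A k).mulVec v) ((A k).mulVec w) = b v w)
    (M : Fin r → MCspace A (-1) →ₗ[ℂ] MCspace A (-1))
    (hM : ∀ k, (M k).comp (Ksub A ⊔ Lsub A (-1)).mkQ
        = ((Ksub A ⊔ Lsub A (-1)).mkQ).comp (Bmat A (-1) k).mulVecLin) :
    ((∀ v, b v v = 0) →
      ∃ b' : MCspace A (-1) →ₗ[ℂ] MCspace A (-1) →ₗ[ℂ] ℂ,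
        (∀ x, (∀ y, b' x y = 0) → x = 0) ∧
        (∀ x y, b' x y = b' y x) ∧
        (∀ k, ∀ x y, b' (M k x) (M k y) = b' x y)) ∧
    ((∀ v w, b v w = b w v) →
      ∃ b' : MCspace A (-1) →ₗ[ℂ] MCspace A (-1) →ₗ[ℂ] ℂ,
        (∀ x, (∀ y, b' x y = 0) → x = 0) ∧
        (∀ x, b' x x = 0) ∧
        (∀ k, ∀ x y, b' (M k x) (M k y) = b' x y)) := by
  exact middle_convolution_neg_one_duality_general two_ne_zero.isUnit
    (fun k => Matrix.mulVec_surjective_iff_isUnit.2 (hUnit k)) hbnd hbinv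
    ((Submodule.mkQ_surjective _).comp (LinearEquiv.surjective _)) (ker_mkQ_comp_uncurry A (-1))
    fun k => by rw [← LinearMap.comp_assoc, hM, LinearMap.comp_assoc,
      Bmat_mulVecLin_comp_uncurry, LinearMap.comp_assoc]

end
end
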